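/- arXiv:hep-th/9407124 — 6 statements merged into one kernel-verified Lean document; each statement's English description precedes it below -/
import Mathlib

section
/- Let R be a (not necessarily commutative) unital ring, and let (S_n)_{n≥0}, (Λ_n)_{n≥0}, (Ψ_n)_{n≥1} be sequences in R with S_0 = Λ_0 = 1 satisfying, for every n ≥ 1: Σ_{k=0}^{n} (−1)^{n−k} S_k Λ_{n−k} = 0, Σ_{k=0}^{n} (−1)^{n−k} Λ_k S_{n−k} = 0, and Σ_{k=0}^{n−1} S_k Ψ_{n−k} = n·S_n. Then for every n ≥ 1 the noncommutative Newton formula Σ_{k=0}^{n−1} (−1)^{n−k−1} Ψ_{n−k} Λ_k = n·Λ_n holds. -/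
/-!
With generating series `σ(t) = ∑ Sₖ tᵏ`, `λ(t) = ∑ Λₖ tᵏ` and `ψ(t) = ∑ Ψₖ₊₁ tᵏ`, the first two
families of relations say that `λ(t)` and `σ(-t)` are mutually inverse, and the third that
`σ' = σ ψ`. In any ring, a derivation sends an inverse `b` of `a` to `-(b * D a * b)`. Since
`(σ(-t))' = -σ(-t) ψ(-t)`, this gives `λ'(t) = λ(t) σ(-t) ψ(-t) λ(t) = ψ(-t) λ(t)`, whose
coefficients are the Newton formula.
-/

open PowerSeries Finset

theorem leibniz_of_mul_eq_one {A : Type*} [Ring A] {D : A → A}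
    (hD : ∀ x y, D (x * y) = D x * y + x * D y) {a b : A} (hab : a * b = 1) (hba : b * a = 1) :
    D b = -(b * D a * b) := by
  have hD_one : D 1 = 0 := by simpa using hD 1 1
  have h_prod : D a * b + a * D b = 0 := by rw [← hD, hab, hD_one]
  calc D b = b * (a * D b) := by rw [← mul_assoc, hba, one_mul]
    _ = b * -(D a * b) := by rw [eq_neg_of_add_eq_zero_right h_prod]
    _ = -(b * D a * b) := by rw [mul_neg, mul_assoc]

section FormalDeriv

variable {R : Type*} [Semiring R]

/-- The formal derivative `d/dt` of a power series. Mathlib's `PowerSeries.derivative` requires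
commutative coefficients. -/
noncomputable def formalDeriv (f : R⟦X⟧) : R⟦X⟧ :=
  mk fun n => (n + 1) • coeff (n + 1) f

theorem coeff_formalDeriv (f : R⟦X⟧) (n : ℕ) :
    coeff n (formalDeriv f) = (n + 1) • coeff (n + 1) f :=
  coeff_mk _ _

theorem formalDeriv_mul (f g : R⟦X⟧) :
    formalDeriv (f * g) = formalDeriv f * g + f * formalDeriv g := by
  ext n
  have h_left : coeff n (formalDeriv f * g) =
      ∑ p ∈ antidiagonal (n + 1), p.1 • (coeff p.1 f * coeff p.2 g) := by
    simp only [coeff_mul, coeff_formalDeriv, Nat.sum_antidiagonal_succ, zero_smul, zero_add,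
      smul_mul_assoc]
  have h_right : coeff n (f * formalDeriv g) =
      ∑ p ∈ antidiagonal (n + 1), p.2 • (coeff p.1 f * coeff p.2 g) := by
    simp only [coeff_mul, coeff_formalDeriv, Nat.sum_antidiagonal_succ', zero_smul, zero_add,
      mul_smul_comm]
  rw [map_add, h_left, h_right, ← sum_add_distrib, coeff_formalDeriv, coeff_mul, smul_sum]
  refine sum_congr rfl fun p hp => ?_
  rw [← add_smul, mem_antidiagonal.mp hp]

end FormalDeriv

section EvalNeg

variable {R : Type*} [Ring R]

/-- The substitution `f(t) ↦ f(-t)` of power series. Mathlib's `PowerSeries.evalNegHom` requires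
commutative coefficients. -/
noncomputable def evalNeg : R⟦X⟧ →+* R⟦X⟧ where
  toFun f := mk fun n => (-1) ^ n * coeff n f
  map_one' := by
    ext n
    simp +contextual [coeff_one]
  map_zero' := by
    ext n
    simp
  map_add' f g := by
    ext n
    simp [mul_add]
  map_mul' f g := by
    ext n
    simp only [coeff_mk, coeff_mul, mul_sum]
    refine sum_congr rfl fun p hp => ?_
    rw [← mem_antidiagonal.mp hp, pow_add, mul_assoc, mul_assoc,
      ((Commute.neg_one_left (coeff p.1 f)).pow_left p.2).left_comm]

theorem coeff_evalNeg (f : R⟦X⟧) (n : ℕ) : coeff n (evalNeg f) = (-1) ^ n * coeff n f := by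
  simp [evalNeg]

theorem evalNeg_evalNeg (f : R⟦X⟧) : evalNeg (evalNeg f) = f := by
  ext n
  rw [coeff_evalNeg, coeff_evalNeg, ← mul_assoc, pow_mul_pow_eq_one n (by simp), one_mul]

theorem formalDeriv_evalNeg (f : R⟦X⟧) : formalDeriv (evalNeg f) = -evalNeg (formalDeriv f) := by
  ext n
  rw [map_neg, coeff_formalDeriv, coeff_evalNeg, coeff_evalNeg, coeff_formalDeriv, mul_smul_comm,
    pow_succ, mul_neg_one, neg_mul, smul_neg]

theorem coeff_mul_evalNeg (f g : R⟦X⟧) (n : ℕ) :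
    coeff n (f * evalNeg g) =
      ∑ k ∈ range (n + 1), (-1) ^ (n - k) * coeff k f * coeff (n - k) g := by
  rw [coeff_mul, Nat.sum_antidiagonal_eq_sum_range_succ fun i j => coeff i f * coeff j (evalNeg g)]
  refine sum_congr rfl fun k _ => ?_
  rw [coeff_evalNeg, ← mul_assoc, ((Commute.neg_one_left (coeff k f)).pow_left (n - k)).eq]

theorem coeff_evalNeg_mul (f g : R⟦X⟧) (n : ℕ) :
    coeff n (evalNeg f * g) =
      ∑ k ∈ range (n + 1), (-1) ^ (n - k) * coeff (n - k) f * coeff k g := by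
  rw [coeff_mul, ← Nat.sum_antidiagonal_swap, Nat.sum_antidiagonal_eq_sum_range_succ_mk]
  simp only [Prod.swap, coeff_evalNeg]

theorem mk_mul_evalNeg_mk_eq_one {a b : ℕ → R} (h_zero : a 0 * b 0 = 1)
    (h_pos : ∀ n, 1 ≤ n → ∑ k ∈ range (n + 1), (-1) ^ (n - k) * a k * b (n - k) = 0) :
    mk a * evalNeg (mk b) = 1 := by
  ext n
  rw [coeff_mul_evalNeg, coeff_one]
  simp only [coeff_mk]
  split_ifs with hn
  · simpa [hn] using h_zero
  · exact h_pos n (Nat.one_le_iff_ne_zero.mpr hn)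

theorem formalDeriv_eq_evalNeg_mul {s l p : R⟦X⟧} (hsl : s * evalNeg l = 1)
    (hls : l * evalNeg s = 1) (hs : formalDeriv s = s * p) :
    formalDeriv l = evalNeg p * l := by
  have hsl' : evalNeg s * l = 1 := by
    simpa only [map_mul, map_one, evalNeg_evalNeg] using congrArg evalNeg hsl
  calc formalDeriv l = -(l * formalDeriv (evalNeg s) * l) :=
        leibniz_of_mul_eq_one formalDeriv_mul hsl' hls
    _ = l * evalNeg s * evalNeg p * l := by
        rw [formalDeriv_evalNeg, hs, map_mul, mul_neg, neg_mul, neg_neg, ← mul_assoc]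
    _ = evalNeg p * l := by rw [hls, one_mul]

end EvalNeg

/-- **Noncommutative Newton formula.**
Let `R` be a (not necessarily commutative) unital ring and `S`, `Λ`, `Ψ` sequences in `R`
with `S 0 = Λ 0 = 1`, satisfying for every `n ≥ 1`:
`∑_{k=0}^{n} (−1)^{n−k} S_k Λ_{n−k} = 0`, `∑_{k=0}^{n} (−1)^{n−k} Λ_k S_{n−k} = 0`, and
`∑_{k=0}^{n−1} S_k Ψ_{n−k} = n • S_n`.  Then for every `n ≥ 1`,
`∑_{k=0}^{n−1} (−1)^{n−k−1} Ψ_{n−k} Λ_k = n • Λ_n`. -/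
theorem noncommutative_newton_formula
    {R : Type*} [Ring R] (S Λ Ψ : ℕ → R)
    (hS0 : S 0 = 1) (hΛ0 : Λ 0 = 1)
    (hSΛ : ∀ n, 1 ≤ n →
      ∑ k ∈ Finset.range (n + 1), (-1 : R) ^ (n - k) * S k * Λ (n - k) = 0)
    (hΛS : ∀ n, 1 ≤ n →
      ∑ k ∈ Finset.range (n + 1), (-1 : R) ^ (n - k) * Λ k * S (n - k) = 0)
    (hNewtonS : ∀ n, 1 ≤ n →
      ∑ k ∈ Finset.range n, S k * Ψ (n - k) = n • S n) :
    ∀ n, 1 ≤ n →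
      ∑ k ∈ Finset.range n, (-1 : R) ^ (n - k - 1) * Ψ (n - k) * Λ k = n • Λ n := by
  have hsl : mk S * evalNeg (mk Λ) = 1 := mk_mul_evalNeg_mk_eq_one (by rw [hS0, hΛ0, one_mul]) hSΛ
  have hls : mk Λ * evalNeg (mk S) = 1 := mk_mul_evalNeg_mk_eq_one (by rw [hS0, hΛ0, one_mul]) hΛS
  have hs : formalDeriv (mk S) = mk S * mk fun n => Ψ (n + 1) := by
    ext n
    rw [coeff_formalDeriv, coeff_mk, ← hNewtonS (n + 1) n.succ_pos, coeff_mul,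
      Nat.sum_antidiagonal_eq_sum_range_succ_mk]
    refine sum_congr rfl fun k hk => ?_
    rw [coeff_mk, coeff_mk, Nat.sub_add_comm (mem_range_succ_iff.mp hk)]
  intro n hn
  obtain ⟨m, rfl⟩ := Nat.exists_eq_add_of_le' hn
  have hl := congrArg (coeff m) (formalDeriv_eq_evalNeg_mul hsl hls hs)
  rw [coeff_formalDeriv, coeff_mk, coeff_evalNeg_mul] at hl
  rw [hl]
  refine sum_congr rfl fun k hk => ?_
  rw [coeff_mk, coeff_mk, Nat.sub_add_comm (mem_range_succ_iff.mp hk), Nat.add_sub_cancel]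
end

section
/- Let F be the free associative algebra over ℚ on noncommuting generators Ψ₁, Ψ₂, Ψ₃, …. Define S_n ∈ F by S₀ = 1 and the recursion n·S_n = Σ_{k=0}^{n−1} S_k Ψ_{n−k} for n ≥ 1, and define Λ_n := Σ_{|J|=n} (−1)^{n−ℓ(J)} S^J. Let Δ : F → F ⊗_ℚ F be the unique ℚ-algebra homomorphism with Δ(Ψ_k) = Ψ_k ⊗ 1 + 1 ⊗ Ψ_k for every k ≥ 1. Then for every k ≥ 0: Δ(S_k) = Σ_{i=0}^{k} S_i ⊗ S_{k−i} and Δ(Λ_k) = Σ_{i=0}^{k} Λ_i ⊗ Λ_{k−i}; that is, the complete and elementary noncommutative symmetric functions form sequences of divided powers for the comultiplication making the Ψ_k primitive. -/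
/-!
Work with generating series over a noncommutative algebra `A`. Call a series group-like if `Δ` sends
it to the product of its images under `a ↦ a ⊗ 1` and `a ↦ 1 ⊗ a`; coefficientwise this says
that its coefficients form a sequence of divided powers. Newton's recursion for `S` is the
differential equation `X S' = S Ψ` for the generating series `S = ∑ S_n Xⁿ` and `Ψ = ∑ Ψ_n Xⁿ`.
Since `Ψ` is primitive and `a ⊗ 1` commutes with `1 ⊗ b`, both sides of the group-like
identity for `S` solve the same equation `X Y' = Y Δ(Ψ)` with the same constant term, hence agree.
Group-like series are closed under inversion and under `X ↦ cX`, and summing over compositions is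
geometric expansion of an inverse: the generating series of `Λ` is `S(-X)⁻¹`.
-/

open Finset TensorProduct

namespace NCSF1

noncomputable section

/-- `F = ℚ⟨Ψ₁,Ψ₂,Ψ₃,…⟩`, the free associative algebra over `ℚ` on countably many
noncommuting generators, the generator of index `n : ℕ` representing `Ψ (n+1)`. -/
abbrev F : Type := FreeAlgebra ℚ ℕ

/-- The noncommuting generators `Ψ₁, Ψ₂, …` (with junk value `Ψ 0 = 0`). -/
def Ψ : ℕ → F
  | 0 => 0
  | n + 1 => FreeAlgebra.ι ℚ n

/-- `S^J = S_{j₁} ⋯ S_{j_s}` for a sequence `S` and a list `J = [j₁,…,j_s]`. -/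
def SProd (S : ℕ → F) (L : List ℕ) : F := (L.map S).prod

/-- The elementary functions `Λ_n = ∑_{|J|=n} (−1)^{n−ℓ(J)} S^J` associated with the
complete functions `S`. -/
def Lam (S : ℕ → F) (n : ℕ) : F :=
  ∑ J : Composition n, ((-1 : ℚ) ^ (n - J.length)) • SProd S J.blocks

/-- `Λ^I = Λ_{i₁} ⋯ Λ_{i_r}`. -/
def LamProd (S : ℕ → F) (L : List ℕ) : F := (L.map (Lam S)).prod

section PowerSeries

open PowerSeries hiding map mk

theorem commute_of_forall_commute_coeff {A : Type*} [Semiring A] {f g : A⟦X⟧}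
    (h : ∀ i j, Commute (coeff i f) (coeff j g)) : Commute f g := by
  ext n
  rw [coeff_mul, coeff_mul, ← Nat.sum_antidiagonal_swap]
  exact sum_congr rfl fun p _ => h p.2 p.1

/-- The Euler operator `X · d/dX` on power series over a possibly noncommutative semiring. -/
def eulerOp {A : Type*} [Semiring A] (f : A⟦X⟧) : A⟦X⟧ :=
  PowerSeries.mk fun n => n • coeff n f

section EulerOp

variable {A B : Type*} [Semiring A] [Semiring B]

@[simp]
theorem coeff_eulerOp (f : A⟦X⟧) (n : ℕ) : coeff n (eulerOp f) = n • coeff n f :=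
  coeff_mk _ _

theorem eulerOp_mul (f g : A⟦X⟧) : eulerOp (f * g) = eulerOp f * g + f * eulerOp g := by
  ext n
  simp only [coeff_eulerOp, coeff_mul, map_add, smul_sum, ← sum_add_distrib]
  refine sum_congr rfl fun p hp => ?_
  rw [← mem_antidiagonal.mp hp, smul_mul_assoc, mul_smul_comm, add_smul]

theorem map_eulerOp (φ : A →+* B) (f : A⟦X⟧) :
    PowerSeries.map φ (eulerOp f) = eulerOp (PowerSeries.map φ f) := by
  ext n
  simp only [coeff_map, coeff_eulerOp, map_nsmul]

theorem eulerOp_map_eq_mul (φ : A →+* B) {f p : A⟦X⟧} (hf : eulerOp f = f * p) :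
    eulerOp (PowerSeries.map φ f) = PowerSeries.map φ f * PowerSeries.map φ p := by
  rw [← map_eulerOp, hf, map_mul]

theorem eq_of_eulerOp_eq_mul [IsAddTorsionFree A] {f g p : A⟦X⟧} (hp : constantCoeff p = 0)
    (hf : eulerOp f = f * p) (hg : eulerOp g = g * p)
    (h0 : constantCoeff f = constantCoeff g) : f = g := by
  ext n
  induction n using Nat.strong_induction_on with
  | _ n ih =>
    obtain rfl | hn := eq_or_ne n 0
    · simpa only [coeff_zero_eq_constantCoeff] using h0
    refine nsmul_right_injective hn ?_
    dsimp only
    rw [← coeff_eulerOp, ← coeff_eulerOp, hf, hg, coeff_mul, coeff_mul]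
    refine sum_congr rfl fun ⟨i, j⟩ hij => ?_
    obtain rfl | hj := Nat.eq_zero_or_pos j
    · simp only [coeff_zero_eq_constantCoeff, hp, mul_zero]
    · rw [ih i (by have := mem_antidiagonal.mp hij; lia)]

theorem eulerOp_mk_eq_mul_iff {a ψ : ℕ → A} :
    eulerOp (PowerSeries.mk a) = PowerSeries.mk a * (X * PowerSeries.mk fun n => ψ (n + 1)) ↔
      ∀ n, 1 ≤ n → n • a n = ∑ k ∈ range n, a k * ψ (n - k) := by
  rw [PowerSeries.ext_iff]
  refine forall_congr' fun n => ?_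
  obtain _ | n := n
  · simp
  · rw [coeff_eulerOp, ← mul_assoc, ← X_mul, mul_assoc, coeff_succ_X_mul, coeff_mul,
      Nat.sum_antidiagonal_eq_sum_range_succ_mk]
    simp only [coeff_mk, Nat.le_add_left, forall_const]
    refine Eq.congr_right (sum_congr rfl fun k hk => ?_)
    rw [Nat.sub_add_comm (mem_range_succ_iff.mp hk)]

end EulerOp

section GroupLike

open Algebra.TensorProduct (includeLeft includeRight)

variable {R A : Type*} [CommSemiring R] [Semiring A] [Algebra R A] {Δ : A →ₐ[R] A ⊗[R] A}

/-- The coefficientwise extension of `a ↦ a ⊗ 1` to power series. -/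
def mapIncludeLeft (R : Type*) {A : Type*} [CommSemiring R] [Semiring A] [Algebra R A] :
    A⟦X⟧ →+* (A ⊗[R] A)⟦X⟧ :=
  PowerSeries.map (includeLeft : A →ₐ[R] A ⊗[R] A)

/-- The coefficientwise extension of `a ↦ 1 ⊗ a` to power series. -/
def mapIncludeRight (R : Type*) {A : Type*} [CommSemiring R] [Semiring A] [Algebra R A] :
    A⟦X⟧ →+* (A ⊗[R] A)⟦X⟧ :=
  PowerSeries.map (includeRight : A →ₐ[R] A ⊗[R] A)

@[simp]
theorem coeff_mapIncludeLeft (f : A⟦X⟧) (n : ℕ) :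
    coeff n (mapIncludeLeft R f) = coeff n f ⊗ₜ[R] 1 :=
  coeff_map ..

@[simp]
theorem coeff_mapIncludeRight (f : A⟦X⟧) (n : ℕ) :
    coeff n (mapIncludeRight R f) = 1 ⊗ₜ[R] coeff n f :=
  coeff_map ..

theorem commute_mapIncludeLeft_mapIncludeRight (f g : A⟦X⟧) :
    Commute (mapIncludeLeft R f) (mapIncludeRight R g) :=
  commute_of_forall_commute_coeff fun i j => by
    simpa using (Commute.one_right (coeff i f)).tmul (Commute.one_left (coeff j g))

/-- A power series `p` is primitive for `Δ` if `Δ(p) = p ⊗ 1 + 1 ⊗ p`, where `Δ` acts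
coefficientwise. -/
def IsPrimitiveSeries (Δ : A →ₐ[R] A ⊗[R] A) (p : A⟦X⟧) : Prop :=
  PowerSeries.map (Δ : A →+* A ⊗[R] A) p = mapIncludeLeft R p + mapIncludeRight R p

/-- A power series `f` is group-like for `Δ` if `Δ(f) = (f ⊗ 1)(1 ⊗ f)`, where `Δ` acts
coefficientwise; equivalently, the coefficients of `f` form a sequence of divided powers. -/
def IsGroupLikeSeries (Δ : A →ₐ[R] A ⊗[R] A) (f : A⟦X⟧) : Prop :=
  PowerSeries.map (Δ : A →+* A ⊗[R] A) f = mapIncludeLeft R f * mapIncludeRight R f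

theorem isPrimitiveSeries_X_mul_mk_iff {ψ : ℕ → A} :
    IsPrimitiveSeries Δ (X * PowerSeries.mk fun n => ψ (n + 1)) ↔
      ∀ k, 1 ≤ k → Δ (ψ k) = ψ k ⊗ₜ[R] 1 + 1 ⊗ₜ[R] ψ k := by
  rw [IsPrimitiveSeries, PowerSeries.ext_iff]
  refine forall_congr' fun n => ?_
  simp only [map_add, coeff_map, coeff_mapIncludeLeft, coeff_mapIncludeRight]
  obtain _ | n := n
  · simp
  · simp [coeff_succ_X_mul]

theorem isGroupLikeSeries_mk_iff {a : ℕ → A} :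
    IsGroupLikeSeries Δ (PowerSeries.mk a) ↔
      ∀ k, Δ (a k) = ∑ i ∈ range (k + 1), a i ⊗ₜ[R] a (k - i) := by
  rw [IsGroupLikeSeries, PowerSeries.ext_iff]
  refine forall_congr' fun k => ?_
  simp [coeff_mul, Nat.sum_antidiagonal_eq_sum_range_succ_mk]

theorem IsGroupLikeSeries.of_eulerOp_eq_mul [IsAddTorsionFree (A ⊗[R] A)] {f p : A⟦X⟧}
    (hp : IsPrimitiveSeries Δ p) (hp0 : constantCoeff p = 0) (hf0 : constantCoeff f = 1)
    (hf : eulerOp f = f * p) : IsGroupLikeSeries Δ f := by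
  have constantCoeff_map (φ : A →+* A ⊗[R] A) (q : A⟦X⟧) :
      constantCoeff (PowerSeries.map φ q) = φ (constantCoeff q) :=
    MvPowerSeries.constantCoeff_map φ q
  have left_eq : eulerOp (mapIncludeLeft R f) = mapIncludeLeft R f * mapIncludeLeft R p :=
    eulerOp_map_eq_mul _ hf
  have right_eq : eulerOp (mapIncludeRight R f) = mapIncludeRight R f * mapIncludeRight R p :=
    eulerOp_map_eq_mul _ hf
  refine eq_of_eulerOp_eq_mul (p := PowerSeries.map (Δ : A →+* A ⊗[R] A) p) ?_
    (eulerOp_map_eq_mul _ hf) ?_ ?_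
  · rw [constantCoeff_map, hp0, map_zero]
  · rw [eulerOp_mul, left_eq, right_eq, hp, mul_add, mul_assoc, mul_assoc, mul_assoc,
      (commute_mapIncludeLeft_mapIncludeRight p f).eq]
  · simp [mapIncludeLeft, mapIncludeRight, constantCoeff_map, hf0, Algebra.TensorProduct.one_def]

theorem IsGroupLikeSeries.units_inv {u : A⟦X⟧ˣ} (hu : IsGroupLikeSeries Δ (u : A⟦X⟧)) :
    IsGroupLikeSeries Δ (↑u⁻¹ : A⟦X⟧) := by
  have right_inv : PowerSeries.map (Δ : A →+* A ⊗[R] A) u *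
      PowerSeries.map (Δ : A →+* A ⊗[R] A) ↑u⁻¹ = 1 := by
    rw [← map_mul, u.mul_inv, map_one]
  have left_inv : mapIncludeRight R ↑u⁻¹ * mapIncludeLeft R ↑u⁻¹ *
      PowerSeries.map (Δ : A →+* A ⊗[R] A) u = 1 := by
    rw [hu, mul_assoc, ← mul_assoc (mapIncludeLeft R _), ← map_mul, u.inv_mul, map_one, one_mul,
      ← map_mul, u.inv_mul, map_one]
  rw [IsGroupLikeSeries, ← left_inv_eq_right_inv left_inv right_inv,
    (commute_mapIncludeLeft_mapIncludeRight _ _).eq]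

theorem IsGroupLikeSeries.of_mul_eq_one {A : Type*} [Ring A] [Algebra R A]
    {Δ : A →ₐ[R] A ⊗[R] A} {f g : A⟦X⟧} (hf : IsGroupLikeSeries Δ f)
    (hf0 : IsUnit (constantCoeff f)) (hfg : f * g = 1) : IsGroupLikeSeries Δ g := by
  obtain ⟨u, rfl⟩ := isUnit_iff_constantCoeff.mpr hf0
  rw [← Units.inv_eq_of_mul_eq_one_right hfg]
  exact hf.units_inv

theorem IsGroupLikeSeries.mk_pow_smul {a : ℕ → A} (ha : IsGroupLikeSeries Δ (PowerSeries.mk a))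
    (c : R) : IsGroupLikeSeries Δ (PowerSeries.mk fun n => c ^ n • a n) := by
  rw [isGroupLikeSeries_mk_iff] at ha ⊢
  intro k
  rw [map_smul, ha, smul_sum]
  refine sum_congr rfl fun i hi => ?_
  rw [TensorProduct.smul_tmul_smul, ← pow_add, Nat.add_sub_cancel' (mem_range_succ_iff.mp hi)]

end GroupLike

end PowerSeries

section Compositions

open PowerSeries hiding map mk

/-- The composition of `n + 1` with first part `p.1 + 1` followed by the parts of `c`. -/
def consComposition {n : ℕ} {p : ℕ × ℕ} (hp : p ∈ antidiagonal n) (c : Composition p.2) :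
    Composition (n + 1) where
  blocks := (p.1 + 1) :: c.blocks
  blocks_pos := by
    rintro _ (_ | ⟨_, hi⟩)
    exacts [p.1.succ_pos, c.blocks_pos hi]
  blocks_sum := by
    rw [List.sum_cons, c.blocks_sum, ← mem_antidiagonal.mp hp, Nat.add_right_comm]

theorem exists_consComposition_eq {n : ℕ} (c : Composition (n + 1)) :
    ∃ (p : ℕ × ℕ) (hp : p ∈ antidiagonal n) (d : Composition p.2), consComposition hp d = c := by
  obtain ⟨_ | ⟨_ | k, L⟩, hpos, hsum⟩ := c
  · simp at hsum
  · simp at hpos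
  · refine ⟨(k, L.sum), ?_, ⟨L, fun h => hpos (List.mem_cons_of_mem _ h), rfl⟩, rfl⟩
    rw [List.sum_cons] at hsum
    exact mem_antidiagonal.mpr (by lia)

theorem sum_composition_succ {M : Type*} [AddCommMonoid M] (f : List ℕ → M) (n : ℕ) :
    ∑ c : Composition (n + 1), f c.blocks =
      ∑ p ∈ antidiagonal n, ∑ c : Composition p.2, f ((p.1 + 1) :: c.blocks) := by
  rw [sum_sigma']
  refine (sum_bij (fun x hx => consComposition (mem_sigma.mp hx).1 x.2) ?_ ?_ ?_ ?_).symm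
  · exact fun _ _ => mem_univ _
  · rintro ⟨⟨k, m⟩, c⟩ _ ⟨⟨k', m'⟩, c'⟩ _ heq
    obtain ⟨hk, hc⟩ := List.cons.inj (congrArg Composition.blocks heq)
    obtain rfl : k = k' := Nat.succ.inj hk
    obtain rfl : m = m' := c.blocks_sum.symm.trans ((congrArg List.sum hc).trans c'.blocks_sum)
    obtain rfl : c = c' := Composition.ext hc
    rfl
  · intro c _
    obtain ⟨p, hp, d, rfl⟩ := exists_consComposition_eq c
    exact ⟨⟨p, d⟩, mem_sigma.mpr ⟨hp, mem_univ _⟩, rfl⟩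
  · exact fun _ _ => rfl

variable {A : Type*}

/-- The sum `∑_{|J| = n} a_{j₁} ⋯ a_{j_s}` over the compositions `J = (j₁, …, j_s)` of `n`. -/
def compositionSum [Semiring A] (a : ℕ → A) (n : ℕ) : A :=
  ∑ J : Composition n, (J.blocks.map a).prod

theorem compositionSum_zero [Semiring A] (a : ℕ → A) : compositionSum a 0 = 1 := by
  have blocks_nil (J : Composition 0) : J.blocks = [] := J.blocks_eq_nil.mpr rfl
  simp [compositionSum, blocks_nil, composition_card]

theorem compositionSum_succ [Semiring A] (a : ℕ → A) (n : ℕ) :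
    compositionSum a (n + 1) = ∑ p ∈ antidiagonal n, a (p.1 + 1) * compositionSum a p.2 := by
  simp only [compositionSum, sum_composition_succ fun L => (L.map a).prod, List.map_cons,
    List.prod_cons, mul_sum]

theorem one_add_X_mul_mk_mul_mk_compositionSum [Semiring A] (a : ℕ → A) :
    1 + (X * PowerSeries.mk fun n => a (n + 1)) * PowerSeries.mk (compositionSum a) =
      PowerSeries.mk (compositionSum a) := by
  ext (_ | n)
  · simp [compositionSum_zero]
  · rw [mul_assoc, map_add, coeff_succ_X_mul, coeff_mul]
    simp [coeff_one, compositionSum_succ]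

theorem mk_mul_mk_compositionSum_neg [Ring A] {a : ℕ → A} (ha0 : a 0 = 1) :
    PowerSeries.mk a * PowerSeries.mk (compositionSum (-a)) = 1 := by
  have mk_eq : PowerSeries.mk a = 1 - X * PowerSeries.mk fun n => (-a) (n + 1) := by
    ext (_ | n)
    · simp [ha0]
    · simp [coeff_succ_X_mul, coeff_one]
  rw [mk_eq, sub_mul, one_mul, sub_eq_iff_eq_add]
  exact (one_add_X_mul_mk_mul_mk_compositionSum (-a)).symm

end Compositions

section Elementary

variable {A : Type*} [Ring A]

/-- The elementary functions `∑_{|J| = n} (-1)^{n - ℓ(J)} S^J` attached to a sequence `S` of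
complete functions in an arbitrary ring. -/
def elementary (S : ℕ → A) (n : ℕ) : A :=
  ∑ J : Composition n, (-1) ^ (n - J.length) * (J.blocks.map S).prod

theorem elementary_eq_neg_one_pow_mul (S : ℕ → A) (n : ℕ) :
    elementary S n = (-1) ^ n * compositionSum (-S) n := by
  rw [elementary, compositionSum, mul_sum]
  refine sum_congr rfl fun J _ => ?_
  have prod_neg : (J.blocks.map (-S)).prod = (-1) ^ J.length * (J.blocks.map S).prod := by
    rw [← J.blocks_length, ← List.length_map (as := J.blocks) S, ← List.prod_map_neg, List.map_map]
    rfl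
  have sign_eq : (-1 : A) ^ (n - J.length) = (-1) ^ n * (-1) ^ J.length := by
    rw [← pow_add, neg_one_pow_congr]
    grind [J.length_le]
  rw [prod_neg, sign_eq, mul_assoc]

theorem Lam_eq_elementary (S : ℕ → F) : Lam S = elementary S := by
  ext n
  simp [Lam, SProd, elementary, Algebra.smul_def]

theorem IsGroupLikeSeries.mk_elementary {R : Type*} [CommRing R] [Algebra R A]
    {Δ : A →ₐ[R] A ⊗[R] A} {S : ℕ → A} (hS0 : S 0 = 1)
    (hS : IsGroupLikeSeries Δ (PowerSeries.mk S)) :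
    IsGroupLikeSeries Δ (PowerSeries.mk (elementary S)) := by
  have inv_groupLike : IsGroupLikeSeries Δ (PowerSeries.mk (compositionSum (-S))) :=
    hS.of_mul_eq_one (by simp [hS0]) (mk_mul_mk_compositionSum_neg hS0)
  convert inv_groupLike.mk_pow_smul (-1) using 3 with n
  simp [elementary_eq_neg_one_pow_mul, Algebra.smul_def]

theorem divided_powers_S_and_Lambda_general {R : Type*} [CommRing R] [Algebra R A]
    [IsAddTorsionFree (A ⊗[R] A)] {ψ S : ℕ → A} (hS0 : S 0 = 1)
    (hSrec : ∀ n : ℕ, 1 ≤ n → n • S n = ∑ k ∈ range n, S k * ψ (n - k))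
    (Δ : A →ₐ[R] A ⊗[R] A)
    (hΔ : ∀ k : ℕ, 1 ≤ k → Δ (ψ k) = ψ k ⊗ₜ[R] 1 + 1 ⊗ₜ[R] ψ k) (k : ℕ) :
    Δ (S k) = (∑ i ∈ range (k + 1), S i ⊗ₜ[R] S (k - i)) ∧
      Δ (elementary S k) = ∑ i ∈ range (k + 1), elementary S i ⊗ₜ[R] elementary S (k - i) := by
  have S_groupLike : IsGroupLikeSeries Δ (PowerSeries.mk S) :=
    .of_eulerOp_eq_mul (isPrimitiveSeries_X_mul_mk_iff.mpr hΔ) (by simp) (by simp [hS0])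
      (eulerOp_mk_eq_mul_iff.mpr hSrec)
  exact ⟨isGroupLikeSeries_mk_iff.mp S_groupLike k,
    isGroupLikeSeries_mk_iff.mp (S_groupLike.mk_elementary hS0) k⟩

end Elementary

/-- **The complete and elementary noncommutative symmetric functions are sequences of
divided powers** for the comultiplication making the `Ψ_k` primitive: if `S` is defined
by `S 0 = 1` and the recursion `n·S_n = ∑_{k=0}^{n−1} S_k Ψ_{n−k}`, and if
`Δ : F → F ⊗ F` is the (unique) `ℚ`-algebra homomorphism with
`Δ(Ψ_k) = Ψ_k ⊗ 1 + 1 ⊗ Ψ_k` for all `k ≥ 1`, then for every `k`,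
`Δ(S_k) = ∑_{i=0}^{k} S_i ⊗ S_{k−i}` and `Δ(Λ_k) = ∑_{i=0}^{k} Λ_i ⊗ Λ_{k−i}`. -/
theorem divided_powers_S_and_Lambda
    (S : ℕ → F) (hS0 : S 0 = 1)
    (hSrec : ∀ n : ℕ, 1 ≤ n → (n : ℚ) • S n = ∑ k ∈ Finset.range n, S k * Ψ (n - k))
    (Δ : F →ₐ[ℚ] F ⊗[ℚ] F)
    (hΔ : ∀ k : ℕ, 1 ≤ k → Δ (Ψ k) = Ψ k ⊗ₜ[ℚ] 1 + 1 ⊗ₜ[ℚ] Ψ k) :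
    ∀ k : ℕ,
      Δ (S k) = (∑ i ∈ Finset.range (k + 1), S i ⊗ₜ[ℚ] S (k - i)) ∧
      Δ (Lam S k) = ∑ i ∈ Finset.range (k + 1), Lam S i ⊗ₜ[ℚ] Lam S (k - i) := by
  have : IsAddTorsionFree (F ⊗[ℚ] F) := .of_module_rat _
  simpa only [Lam_eq_elementary] using divided_powers_S_and_Lambda_general hS0
    (fun n hn => by rw [← Nat.cast_smul_eq_nsmul ℚ, hSrec n hn]) Δ hΔ

end

end NCSF1
end

section
/- Let F be the free associative algebra over ℚ on noncommuting generators Ψ₁, Ψ₂, Ψ₃, …. Define S_n ∈ F by S₀ = 1 and n·S_n = Σ_{k=0}^{n−1} S_k Ψ_{n−k} for n ≥ 1, and set Φ_n := Σ_{|J|=n} (−1)^{ℓ(J)−1}(n/ℓ(J)) S^J (the coefficient of tⁿ in n times the formal logarithm of 1 + Σ_{k≥1} S_k t^k). Let L(Ψ) be the Lie subalgebra of F, with bracket ⁅x,y⁆ = xy − yx, generated by {Ψ_k : k ≥ 1}. Then for every n ≥ 1 the element Φ_n belongs to L(Ψ); moreover Φ_n − Ψ_n lies in the derived Lie ideal L²(Ψ),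 i.e. in the ℚ-linear span of the commutators ⁅x,y⁆ with x, y ∈ L(Ψ). -/
open Finset

namespace NCSF2

noncomputable section

attribute [local instance 100] LieRing.ofAssociativeRing

/-- `F = ℚ⟨Ψ₁,Ψ₂,Ψ₃,…⟩`, the free associative algebra over `ℚ` on countably many
noncommuting generators, the generator of index `n : ℕ` representing `Ψ (n+1)`. -/
abbrev F : Type := FreeAlgebra ℚ ℕ

/-- The noncommuting generators `Ψ₁, Ψ₂, …` (with junk value `Ψ 0 = 0`). -/
def Ψ : ℕ → F
  | 0 => 0
  | n + 1 => FreeAlgebra.ι ℚ n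

/-- `S^J = S_{j₁} ⋯ S_{j_s}`. -/
def SProd (S : ℕ → F) (L : List ℕ) : F := (L.map S).prod

/-- The power sums of the second kind `Φ_n = ∑_{|J|=n} (−1)^{ℓ(J)−1} (n/ℓ(J)) S^J`
(the coefficient of `tⁿ` in `n` times the formal logarithm of `1 + ∑_{k≥1} S_k t^k`). -/
def Phi (S : ℕ → F) (n : ℕ) : F :=
  ∑ J : Composition n,
    ((-1 : ℚ) ^ (J.length - 1) * (n : ℚ) / (J.length : ℚ)) • SProd S J.blocks

/-- `L(Ψ)`: the Lie subalgebra of `F` (with bracket `⁅x,y⁆ = xy − yx`) generated by the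
generators `Ψ_k`, `k ≥ 1`. -/
def LPsi : LieSubalgebra ℚ F :=
  LieSubalgebra.lieSpan ℚ F (Set.range (FreeAlgebra.ι ℚ : ℕ → F))

/-- `L²(Ψ)`: the `ℚ`-linear span of the commutators `⁅x,y⁆` with `x, y ∈ L(Ψ)`. -/
def LPsi2 : Submodule ℚ F :=
  Submodule.span ℚ {z : F | ∃ x ∈ LPsi, ∃ y ∈ LPsi, z = ⁅x, y⁆}

/-!
Put `s = ∑ S_n tⁿ`, `p = ∑ Ψ_n tⁿ` and `θ = t d/dt`, so that the recursion reads `θ s = s p` and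
`Φ_n` is the coefficient of `tⁿ` in `θ (log s)`. For a derivation `d`, moving all factors `u` to the
left in `d (u ^ (m + 1))` leaves iterated commutators of `d u` with `u`. With `u = s - 1`, these
are `s ^ (l + 1) (Ad(s⁻¹) - 1)^l p`, and in the sum over the logarithmic series the terms with a
given `l` carry `(-1)^l / (l + 1)` times the binomial series of `(1 + u) ^ (-(l + 1))`, which
cancels `s ^ (l + 1)`. Hence `θ (log s) = ∑_l (-1)^l / (l + 1) (Ad(s⁻¹) - 1)^l p`, where the term
`l = 0` is `p`. Finally, for constant `y` the series `h = (Ad(s⁻¹) - 1) y` solves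
`θ h = ⁅y + h, p⁆`, so by induction on the degree its coefficients are combinations of brackets.
-/

section

open PowerSeries

section PowerRule

variable {R : Type*} [Ring R]

/-- The commutator map `a ↦ a u - u a`, that is `-ad u`; with this sign the power rule below has
only positive coefficients. -/
def rightCommutator (u : R) : R →+ R := AddMonoidHom.mulRight u - AddMonoidHom.mulLeft u

theorem rightCommutator_apply (u a : R) : rightCommutator u a = a * u - u * a := rfl

theorem map_pow_succ_of_leibniz (d : R →+ R) (hd : ∀ a b, d (a * b) = d a * b + a * d b)
    (u : R) (m : ℕ) :
    d (u ^ (m + 1)) = ∑ l ∈ range (m + 1),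
      (m + 1).choose (l + 1) • (u ^ (m - l) * (rightCommutator u)^[l] (d u)) := by
  induction m with
  | zero => simp
  | succ m ih =>
    have hstep (l : ℕ) : (rightCommutator u)^[l] (d u) * u =
        u * (rightCommutator u)^[l] (d u) + (rightCommutator u)^[l + 1] (d u) := by
      rw [Function.iterate_succ_apply', rightCommutator_apply, add_sub_cancel]
    have hleft : ∑ l ∈ range (m + 1), (m + 1).choose (l + 1) •
          (u ^ (m - l) * (u * (rightCommutator u)^[l] (d u))) =
        ∑ l ∈ range (m + 2), (m + 1).choose (l + 1) •
          (u ^ (m + 1 - l) * (rightCommutator u)^[l] (d u)) := by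
      rw [sum_range_succ _ (m + 1), Nat.choose_succ_self, zero_smul, add_zero]
      refine sum_congr rfl fun l hl => ?_
      rw [Nat.succ_sub (mem_range_succ_iff.1 hl), pow_succ, mul_assoc]
    have hright : ∑ l ∈ range (m + 1), (m + 1).choose (l + 1) •
          (u ^ (m - l) * (rightCommutator u)^[l + 1] (d u)) + u ^ (m + 1) * d u =
        ∑ l ∈ range (m + 2), (m + 1).choose l •
          (u ^ (m + 1 - l) * (rightCommutator u)^[l] (d u)) := by
      rw [sum_range_succ' _ (m + 1)]
      simp
    calc d (u ^ (m + 2))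
        = (∑ l ∈ range (m + 1), (m + 1).choose (l + 1) •
            (u ^ (m - l) * (rightCommutator u)^[l] (d u))) * u + u ^ (m + 1) * d u := by
          rw [pow_succ, hd, ih]
      _ = ∑ l ∈ range (m + 1), (m + 1).choose (l + 1) •
              (u ^ (m - l) * (u * (rightCommutator u)^[l] (d u))) +
          (∑ l ∈ range (m + 1), (m + 1).choose (l + 1) •
            (u ^ (m - l) * (rightCommutator u)^[l + 1] (d u)) + u ^ (m + 1) * d u) := by
          simp only [sum_mul, smul_mul_assoc, mul_assoc, hstep, mul_add, smul_add,
            sum_add_distrib, add_assoc]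
      _ = ∑ l ∈ range (m + 2), (m + 2).choose (l + 1) •
            (u ^ (m + 1 - l) * (rightCommutator u)^[l] (d u)) := by
          simp only [hleft, hright, Nat.choose_succ_succ (m + 1), add_smul, sum_add_distrib]
          rw [add_comm]

/-- The operator `Ad(s⁻¹) - 1`, measuring how far `a` is from being fixed under conjugation by
`s⁻¹`. -/
def conjSubId (s : Rˣ) : R →+ R :=
  (AddMonoidHom.mulRight (s : R)).comp (AddMonoidHom.mulLeft (↑s⁻¹ : R)) - AddMonoidHom.id R

theorem conjSubId_apply (s : Rˣ) (a : R) : conjSubId s a = ↑s⁻¹ * a * s - a := rfl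

theorem mul_conjSubId (s : Rˣ) (a : R) : s * conjSubId s a = a * s - s * a := by
  rw [conjSubId_apply, mul_sub, mul_assoc (↑s⁻¹ : R), Units.mul_inv_cancel_left]

theorem rightCommutator_sub_one_iterate_mul (s : Rˣ) (a : R) (l : ℕ) :
    (rightCommutator (s - 1 : R))^[l] (s * a) = s ^ (l + 1) * (conjSubId s)^[l] a := by
  induction l with
  | zero => simp
  | succ l ih =>
    rw [Function.iterate_succ_apply', ih, Function.iterate_succ_apply' (conjSubId s),
      pow_succ _ (l + 1), mul_assoc, mul_conjSubId, rightCommutator_apply]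
    have hcomm : (s : R) * s ^ (l + 1) = s ^ (l + 1) * s := (pow_mul_comm' _ _).symm
    rw [sub_mul, mul_sub, mul_sub, mul_one, one_mul, ← mul_assoc (s : R), hcomm]
    noncomm_ring

theorem sum_choose_succ_mul_one_add (u : R) (l M : ℕ) :
    (∑ i ∈ range M, ((-1) ^ i * (i + (l + 1)).choose (l + 1) : ℤ) • u ^ i) * (1 + u) =
      ∑ i ∈ range M, ((-1) ^ i * (i + l).choose l : ℤ) • u ^ i -
        ((-1) ^ M * (M + l).choose (l + 1) : ℤ) • u ^ M := by
  induction M with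
  | zero => simp
  | succ M ih =>
    have hpascal : (M + (l + 1)).choose (l + 1) = (M + l).choose l + (M + l).choose (l + 1) :=
      Nat.choose_succ_succ _ _
    rw [sum_range_succ, add_mul, ih, sum_range_succ, add_right_comm M 1 l, add_assoc M l 1,
      hpascal]
    simp only [mul_add, mul_one, smul_mul_assoc, pow_succ]
    push_cast
    module

theorem pow_dvd_sum_choose_mul_one_add_pow_sub_one (u : R) (l M : ℕ) :
    u ^ M ∣
      (∑ i ∈ range M, ((-1) ^ i * (i + l).choose l : ℤ) • u ^ i) * (1 + u) ^ (l + 1) - 1 := by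
  induction l with
  | zero =>
    have hgeom : (∑ i ∈ range M, ((-1) ^ i * (i + 0).choose 0 : ℤ) • u ^ i) * (1 + u) =
        1 - (-u) ^ M := by
      simpa [neg_pow u, add_comm] using geom_sum_mul_neg (-u) M
    rw [zero_add, pow_one, hgeom, sub_sub_cancel_left, neg_pow,
      ((Commute.neg_one_left u).pow_pow M M).eq]
    exact (dvd_mul_right _ _).neg_right
  | succ l ih =>
    rw [pow_succ', ← mul_assoc, sum_choose_succ_mul_one_add, sub_mul, sub_right_comm,
      smul_mul_assoc]
    exact dvd_sub ih (dvd_zsmul_of_dvd _ (dvd_mul_right _ _))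

theorem neg_one_pow_div_mul_choose (i l : ℕ) :
    (-1 : ℚ) ^ (l + i) / ((l + i : ℕ) + 1) * (l + i + 1).choose (l + 1) =
      (-1) ^ l / (l + 1) * ((-1) ^ i * (i + l).choose l : ℤ) := by
  have habsorb : ((l + i : ℕ) + 1 : ℚ) * (i + l).choose l =
      (l + i + 1).choose (l + 1) * (l + 1) := by
    rw [add_comm i l]
    exact_mod_cast Nat.add_one_mul_choose_eq (l + i) l
  rw [div_mul_eq_mul_div, div_mul_eq_mul_div, div_eq_div_iff (by positivity) (by positivity),
    mul_assoc, ← habsorb, pow_add]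
  push_cast
  ring

theorem map_truncated_log_of_leibniz [Algebra ℚ R] (d : R →+ R)
    (hd : ∀ a b, d (a * b) = d a * b + a * d b) (s : Rˣ) (p : R) (hs : d s = s * p) (N : ℕ) :
    d (∑ m ∈ range N, ((-1) ^ m / (m + 1) : ℚ) • (s - 1 : R) ^ (m + 1)) =
      ∑ l ∈ range N, ((-1) ^ l / (l + 1) : ℚ) •
        ((∑ i ∈ range (N - l), ((-1) ^ i * (i + l).choose l : ℤ) • (s - 1 : R) ^ i) *
          (s : R) ^ (l + 1) * (conjSubId s)^[l] p) := by
  have hone : d 1 = 0 := by simpa using hd 1 1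
  have hsub : d (s - 1) = s * p := by rw [map_sub, hone, sub_zero, hs]
  have hterm (l i : ℕ) : ((-1) ^ (l + i) / ((l + i : ℕ) + 1) : ℚ) • (l + i + 1).choose (l + 1) •
        ((s - 1 : R) ^ i * (rightCommutator (s - 1 : R))^[l] (s * p)) =
      ((-1) ^ l / (l + 1) : ℚ) • (((-1) ^ i * (i + l).choose l : ℤ) •
        (s - 1 : R) ^ i * (s : R) ^ (l + 1) * (conjSubId s)^[l] p) := by
    rw [rightCommutator_sub_one_iterate_mul, ← mul_assoc, ← Nat.cast_smul_eq_nsmul ℚ, smul_smul,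
      neg_one_pow_div_mul_choose, ← Int.cast_smul_eq_zsmul ℚ, smul_mul_assoc, smul_mul_assoc,
      smul_smul]
  calc _ = ∑ m ∈ range N, ∑ l ∈ range (m + 1),
          ((-1) ^ (l + (m - l)) / ((l + (m - l) : ℕ) + 1) : ℚ) • (l + (m - l) + 1).choose (l + 1) •
            ((s - 1 : R) ^ (m - l) * (rightCommutator (s - 1 : R))^[l] (s * p)) := by
        rw [map_sum]
        refine sum_congr rfl fun m _ => ?_
        rw [map_rat_smul, map_pow_succ_of_leibniz d hd, hsub, smul_sum]
        refine sum_congr rfl fun l hl => ?_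
        rw [Nat.add_sub_of_le (mem_range_succ_iff.1 hl)]
    _ = _ := by
        rw [sum_range_diag_flip N fun l i => ((-1) ^ (l + i) / ((l + i : ℕ) + 1) : ℚ) •
          (l + i + 1).choose (l + 1) •
            ((s - 1 : R) ^ i * (rightCommutator (s - 1 : R))^[l] (s * p))]
        simp only [hterm, sum_mul, smul_sum]

theorem conjSubId_mul_of_commute (s : Rˣ) {z : R} (hz : Commute (s : R) z) (a : R) :
    conjSubId s (z * a) = z * conjSubId s a := by
  rw [conjSubId_apply, conjSubId_apply, ← mul_assoc, hz.units_inv_left.eq, mul_sub]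
  simp only [mul_assoc]

end PowerRule

section EulerDerivation

section Semiring

variable {A : Type*} [Semiring A]

/-- The Euler derivation `t d/dt` on power series; the derivation of power series in Mathlib is only
defined over commutative coefficients. -/
def eulerDerivation : A⟦X⟧ →+ A⟦X⟧ where
  toFun f := PowerSeries.mk fun n => n • coeff n f
  map_zero' := by ext; simp
  map_add' f g := by ext; simp

theorem coeff_eulerDerivation (f : A⟦X⟧) (n : ℕ) :
    coeff n (eulerDerivation f) = n • coeff n f := by
  simp [eulerDerivation]

theorem eulerDerivation_C (a : A) : eulerDerivation (C a : A⟦X⟧) = 0 := by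
  ext n
  cases n <;> simp [coeff_eulerDerivation, coeff_C]

theorem eulerDerivation_mul (f g : A⟦X⟧) :
    eulerDerivation (f * g) = eulerDerivation f * g + f * eulerDerivation g := by
  ext n
  simp only [coeff_eulerDerivation, map_add, coeff_mul, smul_sum, ← sum_add_distrib]
  refine sum_congr rfl fun p hp => ?_
  rw [← mem_antidiagonal.1 hp, add_smul, smul_mul_assoc, mul_smul_comm]

theorem sum_composition_length_succ {M : Type*} [AddCommMonoid M] (g : List ℕ → M) (k n : ℕ) :
    ∑ J : Composition n with J.length = k + 1, g J.blocks =
      ∑ p ∈ antidiagonal n with 0 < p.1,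
        ∑ J : Composition p.2 with J.length = k, g (p.1 :: J.blocks) := by
  rw [sum_sigma']
  symm
  refine sum_bij (fun x hx => ⟨x.1.1 :: x.2.blocks, ?_, ?_⟩) ?_ ?_ ?_ ?_
  · simp only [mem_sigma, mem_filter, HasAntidiagonal.mem_antidiagonal] at hx
    simpa [hx.1.2] using fun i hi => x.2.blocks_pos hi
  · simp only [mem_sigma, mem_filter, HasAntidiagonal.mem_antidiagonal] at hx
    simpa using hx.1.1
  · rintro ⟨p, J⟩ hx
    simpa [Composition.length] using (mem_sigma.1 hx).2
  · rintro ⟨⟨a, b⟩, J⟩ _ ⟨⟨a', b'⟩, J'⟩ _ h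
    obtain ⟨rfl, hblocks⟩ : a = a' ∧ J.blocks = J'.blocks := by simpa using h
    obtain rfl : b = b' := J.blocks_sum.symm.trans ((congrArg List.sum hblocks).trans J'.blocks_sum)
    rw [Composition.ext hblocks]
  · rintro ⟨blocks, hpos, hsum⟩ hJ
    cases blocks with
    | nil => simp [Composition.length] at hJ
    | cons a l =>
      refine ⟨⟨(a, l.sum), ⟨l, fun hi => hpos (List.mem_cons_of_mem a hi), rfl⟩⟩, ?_, rfl⟩
      have hlength : l.length = k := by simpa [Composition.length] using hJ
      simpa [Composition.length, hpos List.mem_cons_self, hlength] using hsum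
  · intros
    rfl

theorem coeff_pow_eq_sum_composition (u : A⟦X⟧) (hu : constantCoeff u = 0) (k n : ℕ) :
    coeff n (u ^ k) =
      ∑ J : Composition n with J.length = k, (J.blocks.map fun j => coeff j u).prod := by
  induction k generalizing n with
  | zero =>
    rcases n.eq_zero_or_pos with rfl | hn
    · have hblocks (J : Composition 0) : J.blocks = [] := J.blocks_eq_nil.2 rfl
      simp [Composition.length, hblocks, composition_card]
    · simp [coeff_one, hn.ne']
  | succ k ih =>
    rw [pow_succ', coeff_mul,
      sum_composition_length_succ fun l => (l.map fun j => coeff j u).prod, sum_filter]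
    refine sum_congr rfl fun p _ => ?_
    split_ifs with hp
    · simp [ih, mul_sum]
    · rw [Nat.eq_zero_of_not_pos hp, coeff_zero_eq_constantCoeff_apply, hu, zero_mul]

theorem X_pow_add_dvd_mul {f g : A⟦X⟧} {a b : ℕ} (hf : X ^ a ∣ f) (hg : X ^ b ∣ g) :
    X ^ (a + b) ∣ f * g := by
  obtain ⟨f, rfl⟩ := hf
  obtain ⟨g, rfl⟩ := hg
  refine ⟨f * g, ?_⟩
  rw [pow_add, mul_assoc, ← mul_assoc f, (commute_X_pow f b).eq]
  simp only [mul_assoc]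

theorem X_pow_dvd_pow {u : A⟦X⟧} (hu : constantCoeff u = 0) (k : ℕ) : X ^ k ∣ u ^ k := by
  obtain ⟨v, rfl⟩ := X_dvd_iff.2 hu
  exact ⟨v ^ k, (commute_X v).symm.mul_pow k⟩

end Semiring

variable {A : Type*} [Ring A]

theorem X_dvd_conjSubId {s : A⟦X⟧ˣ} (hs : constantCoeff (s : A⟦X⟧) = 1) (f : A⟦X⟧) :
    X ∣ conjSubId s f := by
  have hinv : constantCoeff (↑s⁻¹ : A⟦X⟧) = 1 := by
    simpa only [map_mul, hs, mul_one, map_one] using congrArg constantCoeff s.inv_mul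
  simp [X_dvd_iff, conjSubId_apply, hs, hinv]

theorem X_pow_dvd_conjSubId_iterate {s : A⟦X⟧ˣ} (hs : constantCoeff (s : A⟦X⟧) = 1) (f : A⟦X⟧)
    (k : ℕ) : X ^ k ∣ (conjSubId s)^[k] f := by
  induction k with
  | zero => exact one_dvd _
  | succ k ih =>
    obtain ⟨g, hg⟩ := ih
    rw [Function.iterate_succ_apply', hg, conjSubId_mul_of_commute s (commute_X_pow _ k), pow_succ]
    exact mul_dvd_mul_left _ (X_dvd_conjSubId hs g)

theorem X_pow_dvd_eulerDerivation_truncated_log_sub [Algebra ℚ A] {s : A⟦X⟧ˣ}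
    (hs : constantCoeff (s : A⟦X⟧) = 1) {p : A⟦X⟧} (hp : eulerDerivation (s : A⟦X⟧) = s * p)
    (N : ℕ) :
    X ^ N ∣ eulerDerivation (∑ m ∈ range N, ((-1) ^ m / (m + 1) : ℚ) • (s - 1 : A⟦X⟧) ^ (m + 1)) -
      ∑ l ∈ range N, ((-1) ^ l / (l + 1) : ℚ) • (conjSubId s)^[l] p := by
  have hu : constantCoeff (s - 1 : A⟦X⟧) = 0 := by simp [hs]
  rw [map_truncated_log_of_leibniz _ eulerDerivation_mul s p hp, ← sum_sub_distrib]
  refine dvd_sum fun l hl => ?_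
  have hinv := pow_dvd_sum_choose_mul_one_add_pow_sub_one (s - 1 : A⟦X⟧) l (N - l)
  rw [add_sub_cancel] at hinv
  rw [← smul_sub, ← sub_one_mul]
  refine dvd_smul_of_dvd _ ?_
  simpa only [Nat.sub_add_cancel (mem_range.1 hl).le] using
    X_pow_add_dvd_mul ((X_pow_dvd_pow hu _).trans hinv) (X_pow_dvd_conjSubId_iterate hs p l)

theorem coeff_lie (f g : A⟦X⟧) (n : ℕ) :
    coeff n ⁅f, g⁆ = ∑ p ∈ antidiagonal n, ⁅coeff p.1 f, coeff p.2 g⁆ := by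
  simp only [Ring.lie_def, map_sub, coeff_mul, sum_sub_distrib]
  rw [← Finset.Nat.sum_antidiagonal_swap (f := fun p => coeff p.1 g * coeff p.2 f)]
  rfl

theorem eulerDerivation_conjSubId_C {s : A⟦X⟧ˣ} {p : A⟦X⟧}
    (hp : eulerDerivation (s : A⟦X⟧) = s * p) (y : A) :
    eulerDerivation (conjSubId s (C y)) = ⁅C y + conjSubId s (C y), p⁆ := by
  set h := conjSubId s (C y)
  have hs : (s : A⟦X⟧) * h = C y * s - s * C y := mul_conjSubId s _
  have hd : s * p * h + s * eulerDerivation h = C y * (s * p) - s * p * C y := by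
    simpa [eulerDerivation_mul, eulerDerivation_C, hp] using congrArg eulerDerivation hs
  refine s.isUnit.mul_left_cancel ?_
  calc (s : A⟦X⟧) * eulerDerivation h
      = C y * (s * p) - s * p * C y - s * p * h := by rw [← hd, add_sub_cancel_left]
    _ = (C y * s) * p - s * (p * (C y + h)) := by noncomm_ring
    _ = (s * h + s * C y) * p - s * (p * (C y + h)) := by rw [hs, sub_add_cancel]
    _ = s * ⁅C y + h, p⁆ := by rw [Ring.lie_def]; noncomm_ring

end EulerDerivation

section PowerSums

variable {A : Type*} [Ring A] [Algebra ℚ A]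

/-- The power sums of the second kind `Φ_n` attached to a sequence `S` in any `ℚ`-algebra; `Phi` is
the case of the free algebra `F`. -/
def secondKindPowerSum (S : ℕ → A) (n : ℕ) : A :=
  ∑ J : Composition n,
    ((-1 : ℚ) ^ (J.length - 1) * (n : ℚ) / (J.length : ℚ)) • (J.blocks.map S).prod

theorem secondKindPowerSum_eq_coeff (S : ℕ → A) (hS : S 0 = 1) {n N : ℕ} (hn : 1 ≤ n)
    (hN : n ≤ N) :
    secondKindPowerSum S n = coeff n (eulerDerivation
      (∑ m ∈ range N, ((-1) ^ m / (m + 1) : ℚ) • (PowerSeries.mk S - 1) ^ (m + 1))) := by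
  have hu : constantCoeff (PowerSeries.mk S - 1) = 0 := by
    rw [map_sub, ← coeff_zero_eq_constantCoeff_apply, coeff_mk, hS, map_one, sub_self]
  have hblocks (J : Composition n) :
      (J.blocks.map fun j => coeff j (PowerSeries.mk S - 1)) = J.blocks.map S :=
    List.map_congr_left fun j hj => by simp [coeff_one, (J.blocks_pos hj).ne']
  have hmaps (J : Composition n) (_ : J ∈ univ) : J.length - 1 ∈ range N := by
    have := J.length_pos_of_pos hn
    have := J.length_le
    exact mem_range.2 (by omega)
  rw [secondKindPowerSum, ← sum_fiberwise_of_maps_to hmaps, coeff_eulerDerivation, map_sum,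
    smul_sum]
  refine sum_congr rfl fun m _ => ?_
  have hfilter : (univ.filter fun J : Composition n => J.length - 1 = m) =
      univ.filter fun J : Composition n => J.length = m + 1 :=
    filter_congr fun J _ => by have := J.length_pos_of_pos hn; omega
  rw [hfilter, map_rat_smul, coeff_pow_eq_sum_composition _ hu, smul_sum, smul_sum]
  refine sum_congr rfl fun J hJ => ?_
  rw [(mem_filter.1 hJ).2, hblocks, ← Nat.cast_smul_eq_nsmul ℚ, smul_smul]
  congr 1
  push_cast [Nat.add_sub_cancel]
  ring

theorem secondKindPowerSum_eq_sum_coeff_conjSubId_iterate (S : ℕ → A) (hS : S 0 = 1) (s : A⟦X⟧ˣ)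
    (hs : (s : A⟦X⟧) = PowerSeries.mk S) {p : A⟦X⟧} (hp : eulerDerivation (s : A⟦X⟧) = s * p)
    {n : ℕ} (hn : 1 ≤ n) :
    secondKindPowerSum S n =
      ∑ l ∈ range (n + 1), ((-1) ^ l / (l + 1) : ℚ) • coeff n ((conjSubId s)^[l] p) := by
  have hs0 : constantCoeff (s : A⟦X⟧) = 1 := by
    rw [hs, ← coeff_zero_eq_constantCoeff_apply, coeff_mk, hS]
  have hcoeff := X_pow_dvd_iff.1 (X_pow_dvd_eulerDerivation_truncated_log_sub hs0 hp (n + 1)) n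
    n.lt_succ_self
  rw [secondKindPowerSum_eq_coeff S hS hn n.le_succ, ← hs,
    sub_eq_zero.1 ((map_sub _ _ _).symm.trans hcoeff), map_sum]
  simp only [map_rat_smul]

theorem eulerDerivation_mk_eq_mul {S P : ℕ → A}
    (hrec : ∀ n : ℕ, 1 ≤ n → (n : ℚ) • S n = ∑ k ∈ range n, S k * P (n - k)) :
    eulerDerivation (PowerSeries.mk S) =
      PowerSeries.mk S * (X * PowerSeries.mk fun n => P (n + 1)) := by
  rw [← mul_assoc, ← X_mul, mul_assoc]
  ext n
  cases n with
  | zero => simp [coeff_eulerDerivation]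
  | succ n =>
    rw [coeff_eulerDerivation, coeff_mk, ← Nat.cast_smul_eq_nsmul ℚ, hrec _ n.succ_pos,
      coeff_succ_X_mul, coeff_mul, Finset.Nat.sum_antidiagonal_eq_sum_range_succ_mk]
    refine sum_congr rfl fun k hk => ?_
    rw [coeff_mk, coeff_mk, Nat.succ_sub (mem_range_succ_iff.1 hk)]

end PowerSums

section DerivedSpan

variable {R L : Type*} [CommRing R] [LieRing L] [LieAlgebra R L]

/-- The `R`-span of the brackets of elements of a Lie subalgebra `K`, i.e. its derived ideal, as a
submodule of the ambient Lie algebra. -/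
def derivedSpan (K : LieSubalgebra R L) : Submodule R L :=
  Submodule.span R {z : L | ∃ x ∈ K, ∃ y ∈ K, z = ⁅x, y⁆}

theorem lie_mem_derivedSpan {K : LieSubalgebra R L} {x y : L} (hx : x ∈ K) (hy : y ∈ K) :
    ⁅x, y⁆ ∈ derivedSpan K :=
  Submodule.subset_span ⟨x, hx, y, hy, rfl⟩

theorem derivedSpan_le (K : LieSubalgebra R L) : derivedSpan K ≤ K.toSubmodule := by
  refine Submodule.span_le.2 ?_
  rintro _ ⟨x, hx, y, hy, rfl⟩
  exact K.lie_mem hx hy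

end DerivedSpan

section BracketCoefficients

variable {A : Type*} [Ring A] [Algebra ℚ A]

theorem coeff_conjSubId_C_mem_derivedSpan {K : LieSubalgebra ℚ A} {s : A⟦X⟧ˣ}
    (hs : constantCoeff (s : A⟦X⟧) = 1) {p : A⟦X⟧} (hp : eulerDerivation (s : A⟦X⟧) = s * p)
    (hpK : ∀ n, coeff n p ∈ K) {y : A} (hy : y ∈ K) (n : ℕ) :
    coeff n (conjSubId s (C y)) ∈ derivedSpan K := by
  have hp0 : coeff 0 p = 0 := by
    simpa [coeff_eulerDerivation, hs] using (congrArg (coeff 0) hp).symm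
  induction n using Nat.strong_induction_on with
  | _ n ih =>
    rcases n.eq_zero_or_pos with rfl | hn
    · rw [coeff_zero_eq_constantCoeff_apply, X_dvd_iff.1 (X_dvd_conjSubId hs _)]
      exact zero_mem _
    have hlower {i : ℕ} (hi : i < n) : coeff i (C y + conjSubId s (C y)) ∈ K := by
      rw [map_add, coeff_C]
      refine add_mem ?_ (derivedSpan_le K (ih i hi))
      split_ifs
      exacts [hy, zero_mem K]
    have hbrackets : (n : ℚ) • coeff n (conjSubId s (C y)) ∈ derivedSpan K := by
      rw [Nat.cast_smul_eq_nsmul, ← coeff_eulerDerivation, eulerDerivation_conjSubId_C hp,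
        coeff_lie]
      refine sum_mem fun q hq => ?_
      rw [HasAntidiagonal.mem_antidiagonal] at hq
      rcases q.2.eq_zero_or_pos with hq0 | hq0
      · rw [hq0, hp0, lie_zero]
        exact zero_mem _
      · exact lie_mem_derivedSpan (hlower (by omega)) (hpK _)
    exact ((derivedSpan K).smul_mem_iff (Nat.cast_ne_zero.2 hn.ne')).1 hbrackets

theorem coeff_conjSubId_mem_derivedSpan {K : LieSubalgebra ℚ A} {s : A⟦X⟧ˣ}
    (hs : constantCoeff (s : A⟦X⟧) = 1) {p : A⟦X⟧} (hp : eulerDerivation (s : A⟦X⟧) = s * p)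
    (hpK : ∀ n, coeff n p ∈ K) {f : A⟦X⟧} (hf : ∀ n, coeff n f ∈ K) (n : ℕ) :
    coeff n (conjSubId s f) ∈ derivedSpan K := by
  induction n generalizing f with
  | zero =>
    rw [coeff_zero_eq_constantCoeff_apply, X_dvd_iff.1 (X_dvd_conjSubId hs f)]
    exact zero_mem _
  | succ n ih =>
    rw [eq_X_mul_shift_add_const f, map_add, conjSubId_mul_of_commute s (commute_X _), map_add,
      coeff_succ_X_mul]
    refine add_mem (ih fun k => ?_) (coeff_conjSubId_C_mem_derivedSpan hs hp hpK ?_ _)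
    · rw [coeff_mk]
      exact hf _
    · rw [← coeff_zero_eq_constantCoeff_apply]
      exact hf 0

theorem coeff_conjSubId_iterate_succ_mem_derivedSpan {K : LieSubalgebra ℚ A} {s : A⟦X⟧ˣ}
    (hs : constantCoeff (s : A⟦X⟧) = 1) {p : A⟦X⟧} (hp : eulerDerivation (s : A⟦X⟧) = s * p)
    (hpK : ∀ n, coeff n p ∈ K) (l n : ℕ) :
    coeff n ((conjSubId s)^[l + 1] p) ∈ derivedSpan K := by
  induction l generalizing n with
  | zero => exact coeff_conjSubId_mem_derivedSpan hs hp hpK hpK n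
  | succ l ih =>
    rw [Function.iterate_succ_apply']
    exact coeff_conjSubId_mem_derivedSpan hs hp hpK (fun k => derivedSpan_le K (ih k)) n

end BracketCoefficients

theorem phi_mem_lie_algebra_general {A : Type*} [Ring A] [Algebra ℚ A] (K : LieSubalgebra ℚ A)
    (P : ℕ → A) (hP : ∀ k, 1 ≤ k → P k ∈ K) (S : ℕ → A) (hS0 : S 0 = 1)
    (hSrec : ∀ n : ℕ, 1 ≤ n → (n : ℚ) • S n = ∑ k ∈ range n, S k * P (n - k))
    (n : ℕ) (hn : 1 ≤ n) :
    secondKindPowerSum S n ∈ K ∧ secondKindPowerSum S n - P n ∈ derivedSpan K := by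
  have hs : constantCoeff (PowerSeries.mk S) = 1 := by
    rw [← coeff_zero_eq_constantCoeff_apply, coeff_mk, hS0]
  obtain ⟨s, hsS⟩ : IsUnit (PowerSeries.mk S) := isUnit_iff_constantCoeff.2 (hs ▸ isUnit_one)
  set p : A⟦X⟧ := X * PowerSeries.mk fun n => P (n + 1)
  have hp : eulerDerivation (s : A⟦X⟧) = s * p := hsS ▸ eulerDerivation_mk_eq_mul hSrec
  have hpP (k : ℕ) (hk : 1 ≤ k) : coeff k p = P k := by
    obtain ⟨k, rfl⟩ := Nat.exists_eq_add_of_le' hk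
    rw [coeff_succ_X_mul, coeff_mk]
  have hpK (k : ℕ) : coeff k p ∈ K := by
    rcases k.eq_zero_or_pos with rfl | hk
    · simp [p]
    · exact hpP k hk ▸ hP k hk
  have hderived : secondKindPowerSum S n - P n ∈ derivedSpan K := by
    rw [secondKindPowerSum_eq_sum_coeff_conjSubId_iterate S hS0 s hsS hp hn, sum_range_succ']
    simp only [pow_zero, Nat.cast_zero, zero_add, div_one, one_smul, Function.iterate_zero_apply,
      hpP n hn, add_sub_cancel_right]
    exact sum_mem fun l _ => (derivedSpan K).smul_mem _
      (coeff_conjSubId_iterate_succ_mem_derivedSpan (hsS ▸ hs) hp hpK l n)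
  exact ⟨by simpa using add_mem (derivedSpan_le K hderived) (hP n hn), hderived⟩

end

theorem Psi_mem_LPsi (n : ℕ) : Ψ n ∈ LPsi := by
  cases n with
  | zero => exact zero_mem _
  | succ n => exact LieSubalgebra.subset_lieSpan ⟨n, rfl⟩

/-- **The second-kind power sums lie in the free Lie algebra generated by the first-kind
ones**: if `S` is defined by `S 0 = 1` and the recursion
`n·S_n = ∑_{k=0}^{n−1} S_k Ψ_{n−k}`, then for every `n ≥ 1` the element `Φ_n` belongs to
the Lie algebra `L(Ψ)` generated by the `Ψ_k`, and moreover `Φ_n − Ψ_n` lies in the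
derived Lie ideal `L²(Ψ)`. -/
theorem phi_mem_lie_algebra
    (S : ℕ → F) (hS0 : S 0 = 1)
    (hSrec : ∀ n : ℕ, 1 ≤ n → (n : ℚ) • S n = ∑ k ∈ Finset.range n, S k * Ψ (n - k)) :
    ∀ n : ℕ, 1 ≤ n →
      Phi S n ∈ LPsi ∧ Phi S n - Ψ n ∈ LPsi2 :=
  phi_mem_lie_algebra_general LPsi Ψ (fun k _ => Psi_mem_LPsi k) S hS0 hSrec

end

end NCSF2
end

section
/- In Sym, for any two nonempty compositions I = (i₁,…,i_r) and J = (j₁,…,j_s), the noncommutative ribbon Schur functions satisfy the multiplication rule R_I · R_J = R_{I▷J} + R_{I·J}, where I·J := (i₁,…,i_r,j₁,…,j_s) is the concatenation and I▷J := (i₁,…,i_{r−1}, i_r + j₁, j₂,…,j_s). -/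
open Finset

namespace NCSF

noncomputable section

/-- `Sym = ℚ⟨S₁,S₂,S₃,…⟩`, the free associative algebra over `ℚ` on countably many
noncommuting generators, the generator of index `n : ℕ` representing `S (n+1)`. -/
abbrev Sym : Type := FreeAlgebra ℚ ℕ

/-- The complete homogeneous noncommutative symmetric functions: `S 0 = 1` and
`S (n+1)` is the `n`-th generator of the free algebra. -/
def S : ℕ → Sym
  | 0 => 1
  | n + 1 => FreeAlgebra.ι ℚ n

/-- `S^I = S_{i₁} ⋯ S_{i_r}` for a list `I = [i₁, …, i_r]`. -/
def SProd (L : List ℕ) : Sym := (L.map S).prod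

/-- The set of partial sums `i₁ + ⋯ + i_k` (`1 ≤ k ≤ length`) of a list. -/
def psums (L : List ℕ) : Finset ℕ :=
  (Finset.range L.length).image fun k => (L.take (k + 1)).sum

/-- The noncommutative ribbon Schur function
`R_I = ∑_{J ⪯ I} (−1)^{ℓ(I)−ℓ(J)} S^J`, the sum being over the compositions `J`
of `|I|` that are coarser than `I` (every partial sum of `J` is a partial sum of `I`). -/
def Ribbon (L : List ℕ) : Sym :=
  ∑ J : Composition L.sum,
    if psums J.blocks ⊆ psums L then ((-1 : ℚ) ^ (L.length - J.length)) • SProd J.blocks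
    else 0

/-!
Split the coarsenings `K` of `I·J` according to whether `|I|` is a partial sum of `K`. If it is,
`K` is uniquely the concatenation of a coarsening of `I` and a coarsening of `J`; if it is not, `K`
is a coarsening of `I▷J`, because the partial sums of `I▷J` are those of `I·J` without `|I|`.
Hence the sums `A_L = ∑_{K ⪯ L} (-1)^{ℓ(K)} S^K` satisfy `A_{I·J} = A_I A_J + A_{I▷J}`, and the rule
for `R_L = (-1)^{ℓ(L)} A_L` follows since `ℓ(I·J) = ℓ(I) + ℓ(J)` and `ℓ(I▷J) = ℓ(I) + ℓ(J) - 1`.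
-/

theorem psums_cons (a : ℕ) (L : List ℕ) :
    psums (a :: L) = insert a ((psums L).image (a + ·)) := by
  have hrange : range (L.length + 1) = insert 0 ((range L.length).image (· + 1)) := by
    rw [range_add_one', map_eq_image]
    rfl
  simp [psums, hrange, image_image, Function.comp_def]

theorem psums_append (L M : List ℕ) :
    psums (L ++ M) = psums L ∪ (psums M).image (L.sum + ·) := by
  induction L with
  | nil => simp [psums]
  | cons a L ih =>
    simp [psums_cons, ih, image_union, image_image, Function.comp_def, add_assoc]

theorem psums_append_cons_cons (L M : List ℕ) (a b : ℕ) :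
    psums (L ++ a :: b :: M) = insert (L.sum + a) (psums (L ++ (a + b) :: M)) := by
  simp [psums_append, psums_cons, image_insert, image_image, Function.comp_def, add_assoc]

theorem sum_mem_psums {L : List ℕ} (hL : L ≠ []) : L.sum ∈ psums L := by
  rw [← List.dropLast_append_getLast hL]
  simp [psums_append, psums_cons]

theorem le_sum_of_mem_psums {L : List ℕ} {k : ℕ} (hk : k ∈ psums L) : k ≤ L.sum := by
  simp only [psums, mem_image] at hk
  obtain ⟨i, -, rfl⟩ := hk
  exact (List.take_sublist _ _).sum_le_sum fun _ _ => Nat.zero_le _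

theorem pos_of_mem_psums {L : List ℕ} (hL : ∀ l ∈ L, 0 < l) {k : ℕ} (hk : k ∈ psums L) :
    0 < k := by
  cases L with
  | nil => simp [psums] at hk
  | cons a L =>
    have ha : 0 < a := hL a List.mem_cons_self
    simp only [psums_cons, mem_insert, mem_image] at hk
    omega

theorem exists_append_of_mem_psums {L : List ℕ} {k : ℕ} (hk : k ∈ psums L) :
    ∃ M N, L = M ++ N ∧ M.sum = k := by
  simp only [psums, mem_image] at hk
  obtain ⟨i, -, hi⟩ := hk
  exact ⟨L.take (i + 1), L.drop (i + 1), (List.take_append_drop _ _).symm, hi⟩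

theorem card_psums {L : List ℕ} (hL : ∀ l ∈ L, 0 < l) : #(psums L) = L.length := by
  induction L with
  | nil => simp [psums]
  | cons a L ih =>
    rw [List.forall_mem_cons] at hL
    have ha : a ∉ (psums L).image (a + ·) := by
      simp only [mem_image, not_exists, not_and]
      intro k hk
      have := pos_of_mem_psums hL.2 hk
      omega
    rw [psums_cons, card_insert_of_notMem ha,
      card_image_of_injective _ (add_right_injective a), ih hL.2, List.length_cons]

theorem length_le_of_psums_subset {L M : List ℕ} (hM : ∀ m ∈ M, 0 < m)
    (h : psums M ⊆ psums L) : M.length ≤ L.length :=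
  calc M.length = #(psums M) := (card_psums hM).symm
    _ ≤ #(psums L) := card_le_card h
    _ ≤ #(range L.length) := card_image_le
    _ = L.length := card_range _

theorem sum_add_notMem_psums_append_cons (L M : List ℕ) {a b : ℕ} (ha : 0 < a) (hb : 0 < b) :
    L.sum + a ∉ psums (L ++ (a + b) :: M) := by
  simp only [psums_append, psums_cons, mem_union, mem_image, mem_insert]
  rintro (h | ⟨_, rfl | ⟨k, -, rfl⟩, h⟩)
  · have := le_sum_of_mem_psums h
    omega
  · omega
  · omega

theorem psums_append_subset_psums_append_iff {I J M N : List ℕ} (hI : I ≠ [])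
    (hN : ∀ n ∈ N, 0 < n) (hMI : M.sum = I.sum) :
    psums (M ++ N) ⊆ psums (I ++ J) ↔ psums M ⊆ psums I ∧ psums N ⊆ psums J := by
  rw [psums_append, psums_append, hMI]
  refine ⟨fun h => ⟨fun k hk => ?_, fun k hk => ?_⟩, fun ⟨hM, hN⟩ =>
    union_subset_union hM (image_subset_image hN)⟩
  · have hle : k ≤ I.sum := hMI ▸ le_sum_of_mem_psums hk
    rcases mem_union.1 (h (mem_union_left _ hk)) with hk' | hk'
    · exact hk'
    · obtain ⟨j, -, rfl⟩ := mem_image.1 hk'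
      obtain rfl : j = 0 := by omega
      exact sum_mem_psums hI
  · have hpos : 0 < k := pos_of_mem_psums hN hk
    rcases mem_union.1 (h (mem_union_right _ (mem_image_of_mem _ hk))) with hk' | hk'
    · have := le_sum_of_mem_psums hk'
      omega
    · exact (add_right_injective _).mem_finset_image.1 hk'

theorem append_inj_of_sum_eq {α : Type*} [AddCommMonoid α] [PartialOrder α]
    [IsOrderedCancelAddMonoid α] {M M' N N' : List α} (hM : ∀ m ∈ M, 0 < m)
    (hM' : ∀ m ∈ M', 0 < m) (hsum : M.sum = M'.sum) (h : M ++ N = M' ++ N') :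
    M = M' ∧ N = N' := by
  have eq_nil {K : List α} (hK : ∀ k ∈ K, 0 < k) (h0 : K.sum = 0) : K = [] := by
    by_contra hne
    exact (List.sum_pos K hK hne).ne' h0
  rcases List.append_eq_append_iff.1 h with ⟨K, rfl, rfl⟩ | ⟨K, rfl, rfl⟩
  · have hK : K = [] := eq_nil (List.forall_mem_append.1 hM').2 (by simpa using hsum)
    simp [hK]
  · have hK : K = [] := eq_nil (List.forall_mem_append.1 hM).2 (by simpa using hsum)
    simp [hK]

/-- The compositions coarser than `L`, each encoded by its list of parts. -/
def coarsenings (L : List ℕ) : Finset (List ℕ) :=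
  image Composition.blocks {J : Composition L.sum | psums J.blocks ⊆ psums L}

theorem mem_coarsenings {L M : List ℕ} :
    M ∈ coarsenings L ↔ (∀ m ∈ M, 0 < m) ∧ M.sum = L.sum ∧ psums M ⊆ psums L := by
  simp only [coarsenings, mem_image, mem_filter, mem_univ, true_and]
  constructor
  · rintro ⟨J, hJ, rfl⟩
    exact ⟨fun _ => J.blocks_pos, J.blocks_sum, hJ⟩
  · rintro ⟨hpos, hsum, hsub⟩
    exact ⟨⟨M, fun {m} => hpos m, hsum⟩, hsub, rfl⟩

theorem injOn_append_coarsenings (I J : List ℕ) :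
    Set.InjOn (Function.uncurry (· ++ ·)) (coarsenings I ×ˢ coarsenings J : Set (_ × _)) := by
  rintro ⟨M, N⟩ hMN ⟨M', N'⟩ hMN' h
  simp only [Set.mem_prod, mem_coe, mem_coarsenings] at hMN hMN'
  obtain ⟨⟨hM, hMsum, -⟩, -⟩ := hMN
  obtain ⟨⟨hM', hMsum', -⟩, -⟩ := hMN'
  exact Prod.ext_iff.2 (append_inj_of_sum_eq hM hM' (hMsum.trans hMsum'.symm) h)

theorem filter_sum_mem_psums_coarsenings_append {I : List ℕ} (hI : 0 < I.sum) (J : List ℕ) :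
    {K ∈ coarsenings (I ++ J) | I.sum ∈ psums K} =
      image₂ (· ++ ·) (coarsenings I) (coarsenings J) := by
  have hI_ne : I ≠ [] := by rintro rfl; simp at hI
  ext K
  simp only [mem_filter, mem_image₂, mem_coarsenings]
  constructor
  · rintro ⟨⟨hpos, hsum, hsub⟩, hmem⟩
    obtain ⟨M, N, rfl, hM⟩ := exists_append_of_mem_psums hmem
    rw [List.forall_mem_append] at hpos
    rw [psums_append_subset_psums_append_iff hI_ne hpos.2 hM] at hsub
    rw [List.sum_append, List.sum_append, hM, Nat.add_left_cancel_iff] at hsum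
    exact ⟨M, ⟨hpos.1, hM, hsub.1⟩, N, ⟨hpos.2, hsum, hsub.2⟩, rfl⟩
  · rintro ⟨M, ⟨hMpos, hMsum, hMsub⟩, N, ⟨hNpos, hNsum, hNsub⟩, rfl⟩
    have hM_ne : M ≠ [] := by rintro rfl; simp [← hMsum] at hI
    refine ⟨⟨List.forall_mem_append.2 ⟨hMpos, hNpos⟩, by simp [hMsum, hNsum],
      (psums_append_subset_psums_append_iff hI_ne hNpos hMsum).2 ⟨hMsub, hNsub⟩⟩, ?_⟩
    rw [psums_append, ← hMsum]
    exact mem_union_left _ (sum_mem_psums hM_ne)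

theorem filter_sum_add_notMem_psums_coarsenings (I J : List ℕ) {a b : ℕ} (ha : 0 < a) (hb : 0 < b) :
    {K ∈ coarsenings (I ++ a :: b :: J) | I.sum + a ∉ psums K} =
      coarsenings (I ++ (a + b) :: J) := by
  ext K
  have hsum : (I ++ a :: b :: J).sum = (I ++ (a + b) :: J).sum := by simp [add_assoc]
  simp only [mem_filter, mem_coarsenings, hsum, psums_append_cons_cons]
  constructor
  · rintro ⟨⟨hpos, hK, hsub⟩, hmem⟩
    exact ⟨hpos, hK, (subset_insert_iff_of_notMem hmem).1 hsub⟩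
  · rintro ⟨hpos, hK, hsub⟩
    exact ⟨⟨hpos, hK, hsub.trans (subset_insert _ _)⟩,
      fun hmem => sum_add_notMem_psums_append_cons I J ha hb (hsub hmem)⟩

theorem sum_coarsenings_append_cons_cons {A : Type*} [AddCommMonoid A] (f : List ℕ → A)
    (I J : List ℕ) {a b : ℕ} (ha : 0 < a) (hb : 0 < b) :
    ∑ K ∈ coarsenings (I ++ a :: b :: J), f K =
      ∑ M ∈ coarsenings (I ++ [a]), ∑ N ∈ coarsenings (b :: J), f (M ++ N) +
        ∑ K ∈ coarsenings (I ++ (a + b) :: J), f K := by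
  have hmem := filter_sum_mem_psums_coarsenings_append (I := I ++ [a]) (by simp [ha]) (b :: J)
  rw [List.append_assoc, List.singleton_append, List.sum_append, List.sum_singleton] at hmem
  rw [← sum_filter_add_sum_filter_not _ (fun K => I.sum + a ∈ psums K),
    filter_sum_add_notMem_psums_coarsenings I J ha hb, hmem, ← image_uncurry_product,
    sum_image (by exact_mod_cast injOn_append_coarsenings _ _), sum_product]
  rfl

/-- The sum `∑_{K ⪯ L} (-1)^{ℓ(K)} S^K`, which is the ribbon function of `L` up to the global sign
`(-1)^{ℓ(L)}`; it avoids the truncated subtraction in the exponents of `Ribbon`. -/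
def altCoarseningSum (L : List ℕ) : Sym :=
  ∑ K ∈ coarsenings L, (-1 : ℚ) ^ K.length • SProd K

theorem ribbon_eq_smul_altCoarseningSum (L : List ℕ) :
    Ribbon L = (-1 : ℚ) ^ L.length • altCoarseningSum L := by
  rw [Ribbon, ← sum_filter, altCoarseningSum, coarsenings,
    sum_image fun J _ K _ h => Composition.ext h, smul_sum]
  refine sum_congr rfl fun J hJ => ?_
  have hle : J.length ≤ L.length :=
    length_le_of_psums_subset (fun _ => J.blocks_pos) (mem_filter.1 hJ).2
  rw [smul_smul, ← pow_add, J.blocks_length]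
  exact congrArg (· • SProd J.blocks) (neg_one_pow_congr (by rw [Nat.even_sub hle, Nat.even_add]))

theorem altCoarseningSum_append_cons_cons (I J : List ℕ) {a b : ℕ} (ha : 0 < a) (hb : 0 < b) :
    altCoarseningSum (I ++ a :: b :: J) =
      altCoarseningSum (I ++ [a]) * altCoarseningSum (b :: J) +
        altCoarseningSum (I ++ (a + b) :: J) := by
  simp only [altCoarseningSum, sum_coarsenings_append_cons_cons _ I J ha hb, sum_mul_sum]
  simp only [SProd, List.map_append, List.prod_append, List.length_append, pow_add,
    smul_mul_smul_comm]

/-- **Multiplication rule for noncommutative ribbon Schur functions** (MacMahon's formula):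
for nonempty compositions `I = (i₁,…,i_r)` and `J = (j₁,…,j_s)`,
`R_I · R_J = R_{I▷J} + R_{I·J}` where `I·J` is the concatenation and
`I▷J = (i₁,…,i_{r−1}, i_r + j₁, j₂,…,j_s)`. -/
theorem ribbon_mul (I J : List ℕ) (hI : I ≠ []) (hJ : J ≠ [])
    (hIpos : ∀ i ∈ I, 0 < i) (hJpos : ∀ j ∈ J, 0 < j) :
    Ribbon I * Ribbon J =
      Ribbon (I.dropLast ++ (I.getLast hI + J.head hJ) :: J.tail) + Ribbon (I ++ J) := by
  obtain ⟨I, a, rfl⟩ := (List.eq_nil_or_concat' I).resolve_left hI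
  obtain ⟨b, J, rfl⟩ := List.exists_cons_of_ne_nil hJ
  have ha : 0 < a := hIpos a (by simp)
  have hb : 0 < b := hJpos b List.mem_cons_self
  have hnear : (I ++ [a]).dropLast ++ ((I ++ [a]).getLast hI + (b :: J).head hJ) :: (b :: J).tail =
      I ++ (a + b) :: J := by simp
  have hconcat : I ++ [a] ++ b :: J = I ++ a :: b :: J := by simp
  rw [hnear, hconcat]
  simp only [ribbon_eq_smul_altCoarseningSum, altCoarseningSum_append_cons_cons I J ha hb,
    List.length_append, List.length_cons, List.length_nil, smul_mul_smul_comm, smul_add]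
  module

end

end NCSF
end

section
/- In Sym, for every n ≥ 1 one has Ψ_n = Σ_{k=0}^{n−1} (−1)^k R_{(1^k, n−k)}, where (1^k, n−k) denotes the hook composition consisting of k parts equal to 1 followed by one part equal to n−k. -/
open Finset

namespace NCSF

noncomputable section

/-! Put `σ(t) = ∑ Sₙ tⁿ` and let `Eₙ` be the coefficient of `tⁿ` in `σ(t)⁻¹`, that is,
`Eₙ = ∑ (-1)^ℓ(J) S^J` over all compositions `J` of `n`. The recursion for `Ψ` reads
`σ(t) ∑ Ψₙ tⁿ = ∑ n Sₙ tⁿ`, so `Ψₙ = ∑_{s < n} (n - s) E_s S_{n-s}`. On the other hand a composition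
of `n` with last part `n - s` is coarser than the hook `(1^k, n-k)` exactly when `s ≤ k`, the parts
before the last one being arbitrary. Hence `(-1)^k R_{(1^k, n-k)} = ∑_{s ≤ k} E_s S_{n-s}`, and in
the sum over `k < n` each `E_s S_{n-s}` occurs for the `n - s` values `s ≤ k < n`. -/

/-- For `σ(t) = 1 + ∑_{n ≥ 1} aₙ tⁿ` over a noncommutative ring, the coefficient of `tⁿ` in
`σ(t)⁻¹`, written out as a sum over compositions. For `a = S` it is `(-1)ⁿ Λₙ`, where `Λₙ` is the
noncommutative elementary symmetric function. -/
def invCoeff {R : Type*} [Ring R] (a : ℕ → R) (n : ℕ) : R :=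
  ∑ J : Composition n, (-1) ^ J.length * (J.blocks.map a).prod

theorem sum_composition_eq_sum_append_singleton {M : Type*} [AddCommMonoid M] {n : ℕ}
    (hn : 0 < n) (f : List ℕ → M) :
    ∑ J : Composition n, f J.blocks =
      ∑ s ∈ range n, ∑ J : Composition s, f (J.blocks ++ [n - s]) := by
  rw [sum_sigma']
  symm
  refine sum_bij
    (fun x hx ↦ ((x.2.append (.single (n - x.1) ?_)).cast ?_ : Composition n)) ?_ ?_ ?_ ?_
  · have := mem_range.1 (mem_sigma.1 hx).1
    omega
  · have := mem_range.1 (mem_sigma.1 hx).1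
    omega
  · exact fun _ _ ↦ mem_univ _
  · rintro ⟨s, J⟩ _ ⟨s', J'⟩ _ h
    have hblocks : J.blocks ++ [n - s] = J'.blocks ++ [n - s'] := congrArg Composition.blocks h
    exact Composition.sigma_eq_iff_blocks_eq.2 (List.append_inj_left' hblocks rfl)
  · intro J _
    obtain hnil | ⟨K, m, hJ⟩ := J.blocks.eq_nil_or_concat'
    · exact absurd (J.blocks_eq_nil.1 hnil) hn.ne'
    have hsum : K.sum + m = n := by simpa [hJ] using J.blocks_sum
    have hm : 0 < m := J.blocks_pos (by simp [hJ])
    refine ⟨⟨K.sum, K, fun hi ↦ J.blocks_pos (by simp [hJ, hi]), rfl⟩, ?_, Composition.ext ?_⟩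
    · exact mem_sigma.2 ⟨mem_range.2 (show K.sum < n by omega), mem_univ _⟩
    · simp [Composition.cast, Composition.append, hJ, ← hsum]
  · exact fun _ _ ↦ rfl

theorem sum_range_sum_range_succ {M : Type*} [AddCommMonoid M] (f : ℕ → M) (n : ℕ) :
    ∑ k ∈ range n, ∑ s ∈ range (k + 1), f s = ∑ s ∈ range n, (n - s) • f s := by
  rw [sum_comm' (t' := range n) (s' := fun s ↦ Ico s n) (by grind)]
  simp only [sum_const, Nat.card_Ico]

theorem coeff_mk_mul_mk_update_zero {R : Type*} [Semiring R] (a b : ℕ → R) (n : ℕ) :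
    PowerSeries.coeff n (PowerSeries.mk a * PowerSeries.mk (Function.update b 0 0)) =
      ∑ k ∈ range n, a k * b (n - k) := by
  rw [PowerSeries.coeff_mul, Nat.sum_antidiagonal_eq_sum_range_succ_mk, sum_range_succ]
  simp only [PowerSeries.coeff_mk, Nat.sub_self, Function.update_self, mul_zero, add_zero]
  refine sum_congr rfl fun k hk ↦ ?_
  rw [Function.update_of_ne (Nat.sub_ne_zero_of_lt (mem_range.1 hk))]

section InverseSeries

variable {R : Type*} [Ring R] {a : ℕ → R}

theorem invCoeff_zero : invCoeff a 0 = 1 := by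
  have : Subsingleton (Composition 0) :=
    Fintype.card_le_one_iff_subsingleton.1 (composition_card 0).le
  simp [invCoeff, Fintype.sum_subsingleton _ (Composition.ones 0)]

theorem invCoeff_eq_neg_sum {n : ℕ} (hn : 0 < n) :
    invCoeff a n = -∑ s ∈ range n, invCoeff a s * a (n - s) := by
  simp only [invCoeff, ← Composition.blocks_length]
  rw [sum_composition_eq_sum_append_singleton hn fun L ↦ (-1) ^ L.length * (L.map a).prod]
  simp [sum_mul, pow_succ, mul_assoc]

theorem mk_invCoeff_mul_mk (ha : a 0 = 1) :
    PowerSeries.mk (invCoeff a) * PowerSeries.mk a = 1 := by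
  ext n
  rw [PowerSeries.coeff_mul, Nat.sum_antidiagonal_eq_sum_range_succ_mk, sum_range_succ]
  obtain rfl | hn := n.eq_zero_or_pos
  · simp [invCoeff_zero, ha]
  · simp [PowerSeries.coeff_one, hn.ne', ha, invCoeff_eq_neg_sum hn]

theorem eq_sum_invCoeff_mul_of_eq_sum_mul (ha : a 0 = 1) {b c : ℕ → R}
    (h : ∀ n, 0 < n → c n = ∑ k ∈ range n, a k * b (n - k)) {n : ℕ} (hn : 0 < n) :
    b n = ∑ s ∈ range n, invCoeff a s * c (n - s) := by
  -- The recursion leaves `b 0` and `c 0` unconstrained; both series must start at `t`.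
  let b₀ := PowerSeries.mk (Function.update b 0 0)
  let c₀ := PowerSeries.mk (Function.update c 0 0)
  have hab : PowerSeries.mk a * b₀ = c₀ := by
    ext m
    rw [coeff_mk_mul_mk_update_zero]
    obtain rfl | hm := m.eq_zero_or_pos
    · simp [c₀]
    · simp [c₀, hm.ne', h m hm]
  have hb : b₀ = PowerSeries.mk (invCoeff a) * c₀ := by
    rw [← hab, ← mul_assoc, mk_invCoeff_mul_mk ha, one_mul]
  calc
    b n = PowerSeries.coeff n b₀ := by simp [b₀, hn.ne']
    _ = ∑ s ∈ range n, invCoeff a s * c (n - s) := by rw [hb, coeff_mk_mul_mk_update_zero]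

end InverseSeries

theorem psums_append_singleton (L : List ℕ) (m : ℕ) :
    psums (L ++ [m]) = insert (L.sum + m) (psums L) := by
  rw [psums, psums, List.length_append, List.length_singleton, range_add_one, image_insert]
  congr 1
  · simp
  · refine image_congr fun k hk ↦ ?_
    have hk : k + 1 ≤ L.length := mem_range.1 hk
    simp only [List.take_append_of_le_length hk]

theorem psums_replicate_one (k : ℕ) : psums (List.replicate k 1) = Icc 1 k := by
  induction k with
  | zero => rfl
  | succ k ih =>
    rw [List.replicate_succ', psums_append_singleton, ih, List.sum_replicate, smul_eq_mul, mul_one,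
      insert_Icc_right_eq_Icc_add_one (by omega)]

theorem psums_blocks_subset_Icc {n : ℕ} (J : Composition n) : psums J.blocks ⊆ Icc 1 n := by
  refine image_subset_iff.2 fun k hk ↦ mem_Icc.2 ⟨?_, J.sizeUpTo_le (k + 1)⟩
  exact (J.sizeUpTo_strict_mono (mem_range.1 hk)).pos

theorem psums_blocks_append_subset_psums_hook_iff {s k n : ℕ} (J : Composition s) (hs : s < n)
    (hk : k < n) :
    psums (J.blocks ++ [n - s]) ⊆ psums (List.replicate k 1 ++ [n - k]) ↔ s ≤ k := by
  simp only [psums_append_singleton, psums_replicate_one, J.blocks_sum, List.sum_replicate,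
    smul_eq_mul, mul_one, Nat.add_sub_cancel' hs.le, Nat.add_sub_cancel' hk.le]
  constructor
  · intro h
    obtain rfl | hpos := s.eq_zero_or_pos
    · exact k.zero_le
    have hmem : s ∈ psums J.blocks := by
      simpa [J.blocks_sum] using sum_mem_psums (mt J.blocks_eq_nil.1 hpos.ne')
    have := h (mem_insert_of_mem hmem)
    grind
  · exact fun h ↦ insert_subset_insert _
      ((psums_blocks_subset_Icc J).trans (Icc_subset_Icc_right h))

theorem neg_one_pow_smul_smul_sProd_append_singleton {L : List ℕ} {k : ℕ} (hL : L.length ≤ k)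
    (m : ℕ) :
    (-1 : ℚ) ^ k • (-1 : ℚ) ^ (k - L.length) • SProd (L ++ [m]) =
      (-1) ^ L.length * (L.map S).prod * S m := by
  have hsign : (-1 : ℚ) ^ k * (-1) ^ (k - L.length) = (-1) ^ L.length := by
    rw [← pow_add]
    exact neg_one_pow_congr (by grind)
  rw [smul_smul, hsign, Algebra.smul_def, mul_assoc]
  simp [SProd]

theorem ribbon_eq_sum_composition {L : List ℕ} {n : ℕ} (h : L.sum = n) :
    Ribbon L = ∑ J : Composition n,
      if psums J.blocks ⊆ psums L then (-1 : ℚ) ^ (L.length - J.length) • SProd J.blocks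
      else 0 := by
  subst h
  rfl

theorem neg_one_pow_smul_ribbon_hook {n k : ℕ} (hk : k < n) :
    (-1 : ℚ) ^ k • Ribbon (List.replicate k 1 ++ [n - k]) =
      ∑ s ∈ range (k + 1), invCoeff S s * S (n - s) := by
  let hook : List ℕ := List.replicate k 1 ++ [n - k]
  have hsum : hook.sum = n := by simp [hook, Nat.add_sub_cancel' hk.le]
  have hterm : ∀ s ∈ range n,
      (-1 : ℚ) ^ k • ∑ J : Composition s,
          (if psums (J.blocks ++ [n - s]) ⊆ psums hook then
            (-1 : ℚ) ^ (hook.length - (J.blocks ++ [n - s]).length) • SProd (J.blocks ++ [n - s])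
          else 0) =
        if s ≤ k then invCoeff S s * S (n - s) else 0 := by
    intro s hs
    simp only [hook, psums_blocks_append_subset_psums_hook_iff _ (mem_range.1 hs) hk]
    split_ifs with hsk
    · rw [smul_sum, invCoeff, sum_mul]
      refine sum_congr rfl fun J _ ↦ ?_
      simpa using
        neg_one_pow_smul_smul_sProd_append_singleton (J.length_le.trans hsk) (n - s)
    · simp
  rw [ribbon_eq_sum_composition hsum]
  simp only [← Composition.blocks_length]
  rw [sum_composition_eq_sum_append_singleton (by omega) fun L ↦
    if psums L ⊆ psums hook then (-1 : ℚ) ^ (hook.length - L.length) • SProd L else 0,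
    smul_sum, sum_congr rfl hterm, ← sum_filter]
  congr 1
  grind

/-- **Power sums as alternating sums of hook ribbon functions**:
if `Ψ` satisfies the defining recursion `n·S_n = ∑_{k=0}^{n−1} S_k Ψ_{n−k}` of the
noncommutative power sums of the first kind, then for every `n ≥ 1`,
`Ψ_n = ∑_{k=0}^{n−1} (−1)^k R_{(1^k, n−k)}`. -/
theorem psi_eq_alternating_hooks
    (Ψ : ℕ → Sym)
    (hΨ : ∀ n : ℕ, 1 ≤ n → (n : ℚ) • S n = ∑ k ∈ Finset.range n, S k * Ψ (n - k)) :
    ∀ n, 1 ≤ n →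
      Ψ n = ∑ k ∈ Finset.range n,
        ((-1 : ℚ) ^ k) • Ribbon (List.replicate k 1 ++ [n - k]) := by
  intro n hn
  have hΨ_eq := eq_sum_invCoeff_mul_of_eq_sum_mul rfl hΨ hn
  calc
    Ψ n = ∑ s ∈ range n, invCoeff S s * ((n - s : ℕ) : ℚ) • S (n - s) := hΨ_eq
    _ = ∑ s ∈ range n, (n - s) • (invCoeff S s * S (n - s)) := by
      simp only [Nat.cast_smul_eq_nsmul, mul_smul_comm]
    _ = ∑ k ∈ range n, ∑ s ∈ range (k + 1), invCoeff S s * S (n - s) :=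
      (sum_range_sum_range_succ _ n).symm
    _ = ∑ k ∈ range n, (-1 : ℚ) ^ k • Ribbon (List.replicate k 1 ++ [n - k]) :=
      sum_congr rfl fun k hk ↦ (neg_one_pow_smul_ribbon_hook (mem_range.1 hk)).symm

end

end NCSF
end

section
/- In Sym, for every composition I: S^I = Σ_{J ⪰ I} (1/π_u(J,I)) Ψ^J and Ψ^I = Σ_{J ⪰ I} (−1)^{ℓ(J)−ℓ(I)} lp(J,I) · S^J. Here, for J ⪰ I with canonical decomposition J = J₁·J₂⋯J_m into consecutive blocks with |J_p| = i_p: π_u(K) := k₁(k₁+k₂)⋯(k₁+⋯+k_s) denotes the product of all partial sums of a composition K = (k₁,…,k_s) and π_u(J,I) := Π_p π_u(J_p); lp(K) := k_s denotes the last part of K and lp(J,I) := Π_p lp(J_p). -/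
open Finset

namespace NCSF

noncomputable section

/-- The largest boundary of the coarse composition `I` (including `0`) lying strictly
below `s`.  For `J ⪰ I`, the partial sum of `J` within its block of the canonical
decomposition, at total size `s`, is `s - lastBdry I s`. -/
def lastBdry (I : List ℕ) (s : ℕ) : ℕ :=
  ((insert 0 (psums I)).filter fun x => x < s).max.unbotD 0

/-- `π_u(J,I) = ∏_p π_u(J_p)`: the product, over all positions `k` of `J`, of the
partial sum of `J` within its block of the canonical decomposition of `J ⪰ I`;
for each block `J_p = (k₁,…,k_s)` this contributes `π_u(J_p) = k₁(k₁+k₂)⋯(k₁+⋯+k_s)`. -/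
def piu (J I : List ℕ) : ℕ :=
  ∏ k ∈ Finset.range J.length,
    ((J.take (k + 1)).sum - lastBdry I ((J.take (k + 1)).sum))

/-- `lp(J,I) = ∏_p lp(J_p)`: the product of the last parts of the blocks of the
canonical decomposition of `J ⪰ I`, i.e. of the parts of `J` whose cumulative sum is a
partial sum of `I`. -/
def lpP (J I : List ℕ) : ℕ :=
  ∏ k ∈ (Finset.range J.length).filter (fun k => (J.take (k + 1)).sum ∈ psums I),
    J.getD k 0

/-!
Both expansions are multiplicative along the canonical decomposition: the refinements of
`(m, i₂, …, i_r)` are the concatenations of a composition of `m` with a refinement of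
`(i₂, …, i_r)`, and under concatenation `π_u(J, I)`, `lp(J, I)`, `ℓ(J) - ℓ(I)` split accordingly.
So only compositions `I` with one part matter, and there both identities are the recursion
`n Sₙ = ∑ S_k Ψ_{n-k}` iterated: unfolding `S_k` peels the last part off `J` and produces the
denominators `n`; solving for `Ψₙ` and unfolding `Ψ_{n-k}` peels the first part off `J` and
produces the signs, the remaining term `n Sₙ` contributing the last part.
-/

section PartialSums

variable {m n : ℕ}

theorem mem_psums {L : List ℕ} {x : ℕ} :
    x ∈ psums L ↔ ∃ k < L.length, (L.take (k + 1)).sum = x := by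
  simp only [psums, mem_image, mem_range]

theorem mem_psums_append {K L : List ℕ} {x : ℕ} :
    x ∈ psums (K ++ L) ↔ x ∈ psums K ∨ ∃ y ∈ psums L, K.sum + y = x := by
  simp only [mem_psums]
  constructor
  · rintro ⟨k, hk, rfl⟩
    rcases lt_or_ge k K.length with hkK | hKk
    · exact .inl ⟨k, hkK, by rw [List.take_append_of_le_length hkK]⟩
    · obtain ⟨l, rfl⟩ := Nat.exists_eq_add_of_le hKk
      rw [List.length_append] at hk
      exact .inr ⟨_, ⟨l, by omega, rfl⟩, by
        rw [add_assoc, List.take_length_add_append, List.sum_append]⟩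
  · rintro (⟨k, hk, rfl⟩ | ⟨_, ⟨l, hl, rfl⟩, rfl⟩)
    · exact ⟨k, by rw [List.length_append]; omega, by rw [List.take_append_of_le_length hk]⟩
    · exact ⟨K.length + l, by rw [List.length_append]; omega, by
        rw [add_assoc, List.take_length_add_append, List.sum_append]⟩

theorem mem_psums_cons {a : ℕ} {L : List ℕ} {x : ℕ} :
    x ∈ psums (a :: L) ↔ x = a ∨ ∃ y ∈ psums L, a + y = x := by
  rw [← List.singleton_append, mem_psums_append, List.sum_singleton]
  simp [psums]

theorem sum_take_succ_pos (c : Composition n) {k : ℕ} (hk : k < c.length) :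
    0 < (c.blocks.take (k + 1)).sum :=
  (Nat.zero_le _).trans_lt (c.sizeUpTo_strict_mono hk)

theorem pos_of_mem_psums_s6 {c : Composition n} {x : ℕ} (hx : x ∈ psums c.blocks) : 0 < x := by
  obtain ⟨k, hk, rfl⟩ := mem_psums.1 hx
  exact sum_take_succ_pos c hk

theorem le_of_mem_psums {c : Composition n} {x : ℕ} (hx : x ∈ psums c.blocks) : x ≤ n := by
  obtain ⟨k, -, rfl⟩ := mem_psums.1 hx
  exact c.sizeUpTo_le (k + 1)

theorem self_mem_psums (c : Composition n) (hn : 0 < n) : n ∈ psums c.blocks := by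
  have hlen : 0 < c.length := c.length_pos_iff.2 hn
  exact mem_psums.2
    ⟨c.length - 1, Nat.sub_lt hlen one_pos, c.sizeUpTo_ofLength_le _ (by omega)⟩

theorem card_psums_s6 (c : Composition n) : (psums c.blocks).card = c.length := by
  rw [psums, card_image_of_injOn, card_range, c.blocks_length]
  intro k hk l hl hkl
  rw [coe_range, Set.mem_Iio, c.blocks_length] at hk hl
  have hfin : (⟨k + 1, by omega⟩ : Fin (c.length + 1)) = ⟨l + 1, by omega⟩ :=
    c.boundary.injective (Fin.ext hkl)
  simpa using hfin

theorem length_le_of_psums_subset_s6 {I J : Composition n} (h : psums I.blocks ⊆ psums J.blocks) :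
    I.length ≤ J.length := by
  simpa only [card_psums_s6] using card_le_card h

theorem add_mem_psums_cons {L : List ℕ} {t : ℕ} (ht : 0 < t) :
    m + t ∈ psums (m :: L) ↔ t ∈ psums L := by
  simp only [mem_psums_cons, Nat.add_eq_left, ht.ne', false_or, add_right_inj, exists_eq_right]

theorem psums_cons_subset_append_iff (K : Composition m) (I J : Composition n) (hm : 0 < m) :
    psums (m :: I.blocks) ⊆ psums (K.blocks ++ J.blocks) ↔ psums I.blocks ⊆ psums J.blocks := by
  constructor
  · intro h x hx
    have hx₀ : 0 < x := pos_of_mem_psums_s6 hx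
    rcases mem_psums_append.1 (h ((add_mem_psums_cons hx₀).2 hx)) with hK | ⟨y, hy, hxy⟩
    · have := le_of_mem_psums hK
      omega
    · rw [K.blocks_sum, add_right_inj] at hxy
      exact hxy ▸ hy
  · intro h x hx
    rw [mem_psums_append, K.blocks_sum]
    rcases mem_psums_cons.1 hx with rfl | ⟨y, hy, rfl⟩
    · exact .inl (self_mem_psums K hm)
    · exact .inr ⟨y, h hy, rfl⟩

end PartialSums

section SumsOverCompositions

variable {M : Type*} [AddCommMonoid M] {m n : ℕ}

theorem sum_composition_zero (F : List ℕ → M) : ∑ J : Composition 0, F J.blocks = F [] := by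
  have h (J : Composition 0) : J.blocks = [] := J.blocks_eq_nil.2 rfl
  simp only [h, sum_const, card_univ, composition_card, Nat.zero_sub, pow_zero, one_smul]

theorem sum_composition_reverse (n : ℕ) (F : List ℕ → M) :
    ∑ J : Composition n, F J.blocks = ∑ J : Composition n, F J.blocks.reverse :=
  (Fintype.sum_bijective _ Composition.reverse_bijective _ _ fun _ => rfl).symm

theorem sum_composition_cons (n : ℕ) (F : List ℕ → M) :
    ∑ J : Composition (n + 1), F J.blocks =
      ∑ k ∈ range (n + 1), ∑ J : Composition (n - k), F ((k + 1) :: J.blocks) := by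
  let prepend (p : Σ k : Fin (n + 1), Composition (n - k)) : Composition (n + 1) :=
    ((Composition.single (p.1 + 1) p.1.val.succ_pos).append p.2).cast (by omega)
  have blocks_prepend (p) : (prepend p).blocks = (p.1 + 1 : ℕ) :: p.2.blocks := rfl
  have prepend_bijective : Function.Bijective prepend := by
    constructor
    · rintro ⟨k, J⟩ ⟨k', J'⟩ h
      have hblocks := congrArg Composition.blocks h
      simp only [blocks_prepend, List.cons.injEq, Nat.add_right_cancel_iff] at hblocks
      obtain rfl : k = k' := Fin.ext hblocks.1
      rw [Composition.ext hblocks.2]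
    · rintro ⟨_ | ⟨a, L⟩, hpos, hsum⟩
      · simp at hsum
      · have ha : 0 < a := hpos List.mem_cons_self
        rw [List.sum_cons] at hsum
        refine ⟨⟨⟨a - 1, by omega⟩, ⟨L, fun h => hpos (List.mem_cons_of_mem _ h), ?_⟩⟩, ?_⟩
        · dsimp only
          omega
        · ext1
          simp only [blocks_prepend, Nat.sub_add_cancel ha]
  rw [← Fin.sum_univ_eq_sum_range fun k => ∑ J : Composition (n - k), F ((k + 1) :: J.blocks),
    ← Fintype.sum_sigma']
  exact (Fintype.sum_bijective prepend prepend_bijective _ _ fun _ => rfl).symm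

theorem sum_composition_concat (n : ℕ) (F : List ℕ → M) :
    ∑ J : Composition (n + 1), F J.blocks =
      ∑ k ∈ range (n + 1), ∑ J : Composition k, F (J.blocks ++ [n + 1 - k]) := by
  rw [sum_composition_reverse, sum_composition_cons n fun L => F L.reverse, ← sum_range_reflect]
  refine sum_congr rfl fun k hk => ?_
  have hk : k ≤ n := Nat.lt_succ_iff.1 (mem_range.1 hk)
  rw [Nat.add_sub_cancel, Nat.sub_sub_self hk, ← Nat.sub_add_comm hk,
    sum_composition_reverse k fun L => F (L ++ [n + 1 - k])]
  simp only [List.reverse_cons]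

theorem composition_eq_of_blocks_isPrefix {K K' : Composition n}
    (h : K.blocks <+: K'.blocks) : K = K' := by
  obtain ⟨T, hT⟩ := h
  have hsum : T.sum = 0 := by
    have := congrArg List.sum hT
    rw [List.sum_append, K.blocks_sum, K'.blocks_sum] at this
    omega
  have hT_nil : T = [] := List.eq_nil_iff_forall_not_mem.2 fun x hx =>
    (K'.blocks_pos (hT ▸ List.mem_append_right _ hx)).ne' (List.sum_eq_zero_iff.1 hsum x hx)
  ext1
  rw [← hT, hT_nil, List.append_nil]

theorem composition_append_injective :
    Function.Injective fun p : Composition m × Composition n => p.1.append p.2 := by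
  rintro ⟨K, J⟩ ⟨K', J'⟩ h
  have hblocks : K.blocks ++ J.blocks = K'.blocks ++ J'.blocks := congrArg Composition.blocks h
  obtain rfl : K = K' :=
    (List.prefix_or_prefix_of_prefix ⟨_, rfl⟩ ⟨_, hblocks.symm⟩).elim
      composition_eq_of_blocks_isPrefix fun h => (composition_eq_of_blocks_isPrefix h).symm
  rw [List.append_cancel_left_eq] at hblocks
  rw [Composition.ext hblocks]

theorem exists_append_eq_of_mem_psums {J : Composition (m + n)} (h : m ∈ psums J.blocks) :
    ∃ p : Composition m × Composition n, p.1.append p.2 = J := by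
  obtain ⟨k, -, hk⟩ := mem_psums.1 h
  have hsum := J.blocks_sum
  rw [← List.sum_take_add_sum_drop _ (k + 1), hk, add_right_inj] at hsum
  refine ⟨⟨⟨J.blocks.take (k + 1), fun h => J.blocks_pos (List.mem_of_mem_take h), hk⟩,
    ⟨J.blocks.drop (k + 1), fun h => J.blocks_pos (List.mem_of_mem_drop h), hsum⟩⟩, ?_⟩
  ext1
  exact List.take_append_drop _ _

theorem sum_refinement_cons (hm : 0 < m) (I : Composition n) (F : List ℕ → M) :
    (∑ J : Composition (m + n), if psums (m :: I.blocks) ⊆ psums J.blocks then F J.blocks else 0) =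
      ∑ K : Composition m, ∑ J : Composition n,
        if psums I.blocks ⊆ psums J.blocks then F (K.blocks ++ J.blocks) else 0 := by
  rw [← Fintype.sum_prod_type']
  symm
  refine Fintype.sum_of_injective _ composition_append_injective _ _ (fun J hJ => if_neg ?_)
    fun ⟨K, J⟩ => ?_
  · exact fun hsub => hJ (exists_append_eq_of_mem_psums (hsub (mem_psums_cons.2 (.inl rfl))))
  · simp only [Composition.append, psums_cons_subset_append_iff K I J hm]

end SumsOverCompositions

theorem prod_map_eq_sum_refinement {R A : Type*} [CommSemiring R] [Semiring A] [Algebra R A]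
    {x y : ℕ → A} {b : List ℕ → R} {c : List ℕ → List ℕ → R}
    (hy : ∀ m, 0 < m → y m = ∑ K : Composition m, b K.blocks • (K.blocks.map x).prod)
    (hc_nil : c [] [] = 1)
    (hc_append : ∀ {m n : ℕ} (K : Composition m) (I J : Composition n), 0 < m →
      psums I.blocks ⊆ psums J.blocks →
        c (K.blocks ++ J.blocks) (m :: I.blocks) = b K.blocks * c J.blocks I.blocks)
    {n : ℕ} (I : Composition n) :
    (I.blocks.map y).prod = ∑ J : Composition n,
      if psums I.blocks ⊆ psums J.blocks then c J.blocks I.blocks • (J.blocks.map x).prod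
      else 0 := by
  induction I using Composition.recOnSingleAppend with
  | zero =>
    rw [sum_composition_zero fun L => if _ ⊆ psums L then c L _ • (L.map x).prod else 0]
    simp [hc_nil]
  | single_append k n I ih =>
    have blocks_append : ((Composition.single (k + 1) k.succ_pos).append I).blocks =
      (k + 1) :: I.blocks := rfl
    rw [blocks_append, List.map_cons, List.prod_cons, ih, hy _ k.succ_pos, sum_mul_sum,
      sum_refinement_cons k.succ_pos I fun L => c L ((k + 1) :: I.blocks) • (L.map x).prod]
    refine sum_congr rfl fun K _ => sum_congr rfl fun J _ => ?_
    split_ifs with hIJ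
    · rw [hc_append K I J k.succ_pos hIJ, List.map_append, List.prod_append, smul_mul_smul_comm]
    · rw [mul_zero]

section Coefficients

variable {m n : ℕ}

/-- `π_u(K) = k₁(k₁+k₂)⋯(k₁+⋯+k_s)`, the product of the partial sums of a single composition
`K = (k₁, …, k_s)`; it is the contribution of one block of the canonical decomposition to
`piu`. -/
def prodPartialSums (K : List ℕ) : ℕ :=
  ∏ k ∈ range K.length, (K.take (k + 1)).sum

theorem prodPartialSums_concat (K : List ℕ) (a : ℕ) :
    prodPartialSums (K ++ [a]) = prodPartialSums K * (K.sum + a) := by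
  rw [prodPartialSums, List.length_append, List.length_singleton, prod_range_succ,
    ← List.length_singleton (a := a), List.take_length_add_append, List.take_length,
    List.sum_append, List.sum_singleton]
  congr 1
  exact prod_congr rfl fun k hk => congrArg List.sum
    (List.take_append_of_le_length (mem_range.1 hk))

theorem isGreatest_lastBdry (I : List ℕ) {s : ℕ} (hs : 0 < s) :
    IsGreatest {x | x ∈ insert 0 (psums I) ∧ x < s} (lastBdry I s) := by
  have hne : ((insert 0 (psums I)).filter (· < s)).Nonempty :=
    ⟨0, mem_filter.2 ⟨mem_insert_self _ _, hs⟩⟩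
  have hmax := isGreatest_max' _ hne
  rw [coe_filter] at hmax
  rwa [lastBdry, ← coe_max' hne, WithBot.unbotD_coe]

theorem lastBdry_cons_of_le (I : List ℕ) {s : ℕ} (hs : 0 < s) (hsm : s ≤ m) :
    lastBdry (m :: I) s = 0 := by
  refine (isGreatest_lastBdry _ hs).unique ⟨⟨mem_insert_self _ _, hs⟩, ?_⟩
  rintro x ⟨hx, hxs⟩
  rcases mem_insert.1 hx with rfl | hx
  · exact le_rfl
  · rcases mem_psums_cons.1 hx with rfl | ⟨y, -, rfl⟩ <;> omega

theorem lastBdry_cons_add (I : List ℕ) {t : ℕ} (ht : 0 < t) :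
    lastBdry (m :: I) (m + t) = m + lastBdry I t := by
  obtain ⟨⟨hmem, hlt⟩, hub⟩ := isGreatest_lastBdry I ht
  refine (isGreatest_lastBdry _ (by omega)).unique ⟨⟨?_, by omega⟩, ?_⟩
  · refine mem_insert_of_mem (mem_psums_cons.2 ?_)
    rcases mem_insert.1 hmem with h | h
    · exact .inl (by rw [h, add_zero])
    · exact .inr ⟨_, h, rfl⟩
  · rintro x ⟨hx, hxt⟩
    rcases mem_insert.1 hx with rfl | hx
    · exact Nat.zero_le _
    · rcases mem_psums_cons.1 hx with rfl | ⟨y, hy, rfl⟩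
      · exact Nat.le_add_right _ _
      · exact Nat.add_le_add_left (hub ⟨mem_insert_of_mem hy, by omega⟩) m

theorem piu_append (K : Composition m) (J : Composition n) (I : List ℕ) :
    piu (K.blocks ++ J.blocks) (m :: I) = prodPartialSums K.blocks * piu J.blocks I := by
  rw [piu, List.length_append, prod_range_add, prodPartialSums, piu]
  congr 1 <;> refine prod_congr rfl fun k hk => ?_
  · have hk : k < K.length := mem_range.1 hk
    rw [List.take_append_of_le_length hk,
      lastBdry_cons_of_le I (sum_take_succ_pos K hk) (K.sizeUpTo_le (k + 1)), Nat.sub_zero]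
  · rw [add_assoc, List.take_length_add_append, List.sum_append, K.blocks_sum,
      lastBdry_cons_add I (sum_take_succ_pos J (mem_range.1 hk)), Nat.add_sub_add_left]

theorem sum_take_succ_mem_psums_cons_iff (K : Composition m) (I : List ℕ) {k : ℕ}
    (hk : k < K.length) : (K.blocks.take (k + 1)).sum ∈ psums (m :: I) ↔ k = K.length - 1 := by
  have hle : (K.blocks.take (k + 1)).sum ≤ m := K.sizeUpTo_le (k + 1)
  constructor
  · intro hmem
    by_contra hne
    have hlt : (K.blocks.take (k + 1)).sum < K.sizeUpTo (k + 2) :=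
      K.sizeUpTo_strict_mono (by omega)
    have hle' : K.sizeUpTo (k + 2) ≤ m := K.sizeUpTo_le (k + 2)
    rcases mem_psums_cons.1 hmem with h | ⟨y, -, h⟩ <;> omega
  · rintro rfl
    exact mem_psums_cons.2 (.inl (K.sizeUpTo_ofLength_le _ (by omega)))

theorem lpP_append (K : Composition m) (J : Composition n) (I : List ℕ) (hm : 0 < m) :
    lpP (K.blocks ++ J.blocks) (m :: I) = K.blocks.getLastD 0 * lpP J.blocks I := by
  rw [lpP, prod_filter, List.length_append, prod_range_add, lpP, prod_filter]
  congr 1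
  · have hlast : K.length - 1 ∈ range K.length :=
      mem_range.2 (Nat.sub_one_lt (K.length_pos_iff.2 hm).ne')
    calc _ = ∏ k ∈ range K.length, if k = K.length - 1 then K.blocks.getD k 0 else 1 := by
          refine prod_congr rfl fun k hk => ?_
          have hk : k < K.length := mem_range.1 hk
          rw [List.take_append_of_le_length hk, List.getD_append _ _ _ _ hk]
          simp only [sum_take_succ_mem_psums_cons_iff K I hk]
      _ = K.blocks.getLastD 0 := by
          rw [prod_ite_eq' _ _ _, if_pos hlast, List.getLastD_eq_getLast?,
            List.getLast?_eq_getElem?, List.getD_eq_getElem?_getD, K.blocks_length]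
  · refine prod_congr rfl fun k hk => ?_
    rw [add_assoc, List.take_length_add_append, List.sum_append, K.blocks_sum,
      List.getD_append_right _ _ _ _ (Nat.le_add_right _ _), Nat.add_sub_cancel_left]
    simp only [add_mem_psums_cons (sum_take_succ_pos J (mem_range.1 hk))]

/-- `(−1)^(ℓ(K)−1) lp(K)`, the coefficient of `S^K` in the expansion of a single `Ψₙ`; here `K` is
a nonempty composition and `lp(K)` its last part. -/
def signedLastPart (R : Type*) [Ring R] (K : List ℕ) : R :=
  (-1) ^ (K.length - 1) * (K.getLastD 0 : R)

theorem signedLastPart_singleton (R : Type*) [Ring R] (a : ℕ) :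
    signedLastPart R [a] = a := by
  simp [signedLastPart]

theorem signedLastPart_cons (R : Type*) [Ring R] (a : ℕ) {K : List ℕ} (hK : K ≠ []) :
    signedLastPart R (a :: K) = -signedLastPart R K := by
  obtain ⟨b, L, rfl⟩ := List.exists_cons_of_ne_nil hK
  simp only [signedLastPart, List.getLastD_cons, List.length_cons, Nat.add_sub_cancel, pow_succ,
    mul_neg_one, neg_mul]

theorem neg_one_pow_mul_lpP_append (R : Type*) [CommRing R] (K : Composition m)
    (I J : Composition n) (hm : 0 < m) (hIJ : psums I.blocks ⊆ psums J.blocks) :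
    (-1 : R) ^ ((K.blocks ++ J.blocks).length - (m :: I.blocks).length) *
        (lpP (K.blocks ++ J.blocks) (m :: I.blocks) : R) =
      signedLastPart R K.blocks *
        ((-1) ^ (J.blocks.length - I.blocks.length) * (lpP J.blocks I.blocks : R)) := by
  have hK : 1 ≤ K.blocks.length := K.length_pos_iff.2 hm
  have hlen : I.blocks.length ≤ J.blocks.length := length_le_of_psums_subset_s6 hIJ
  have hsub : K.blocks.length + J.blocks.length - (I.blocks.length + 1) =
      (K.blocks.length - 1) + (J.blocks.length - I.blocks.length) := by omega
  rw [lpP_append K J _ hm, List.length_append, List.length_cons, hsub, pow_add, Nat.cast_mul,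
    signedLastPart, mul_mul_mul_comm]

end Coefficients

/-- `ψ` is the sequence of power sums of the first kind attached to the complete functions
`s`, normalized by `s 0 = 1`; the value `ψ 0` is arbitrary. -/
structure IsPowerSumFirstKind {A : Type*} [Semiring A] (s ψ : ℕ → A) : Prop where
  zero : s 0 = 1
  newton : ∀ n, 1 ≤ n → n • s n = ∑ k ∈ range n, s k * ψ (n - k)

section OnePart

variable {A : Type*} {s ψ : ℕ → A}

theorem IsPowerSumFirstKind.complete_eq_sum_powerSum {𝕜 : Type*} [Semifield 𝕜] [CharZero 𝕜]
    [Semiring A] [Algebra 𝕜 A] (h : IsPowerSumFirstKind s ψ) (n : ℕ) :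
    s n = ∑ J : Composition n, (prodPartialSums J.blocks : 𝕜)⁻¹ • (J.blocks.map ψ).prod := by
  induction n using Nat.strong_induction_on with
  | _ n ih =>
    rcases n with _ | n
    · rw [sum_composition_zero fun L => (prodPartialSums L : 𝕜)⁻¹ • (L.map ψ).prod]
      simp [h.zero, prodPartialSums]
    have hn : ((n + 1 : ℕ) : 𝕜) ≠ 0 := Nat.cast_ne_zero.2 n.succ_ne_zero
    calc s (n + 1)
        = ((n + 1 : ℕ) : 𝕜)⁻¹ • ∑ k ∈ range (n + 1), s k * ψ (n + 1 - k) := by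
          rw [← h.newton _ n.succ_pos, ← Nat.cast_smul_eq_nsmul 𝕜, inv_smul_smul₀ hn]
      _ = ∑ k ∈ range (n + 1), ∑ J : Composition k,
            (prodPartialSums (J.blocks ++ [n + 1 - k]) : 𝕜)⁻¹ •
              ((J.blocks ++ [n + 1 - k]).map ψ).prod := by
          rw [smul_sum]
          refine sum_congr rfl fun k hk => ?_
          have hk : k < n + 1 := mem_range.1 hk
          rw [ih k hk, sum_mul, smul_sum]
          refine sum_congr rfl fun J _ => ?_
          rw [prodPartialSums_concat, J.blocks_sum, Nat.add_sub_cancel' hk.le, Nat.cast_mul,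
            mul_inv_rev, mul_smul, List.map_append, List.prod_append, List.map_singleton,
            List.prod_singleton, smul_mul_assoc]
      _ = ∑ J : Composition (n + 1), (prodPartialSums J.blocks : 𝕜)⁻¹ • (J.blocks.map ψ).prod :=
          (sum_composition_concat n fun L => (prodPartialSums L : 𝕜)⁻¹ • (L.map ψ).prod).symm

theorem IsPowerSumFirstKind.powerSum_eq_sum_complete {R : Type*} [CommRing R] [Ring A] [Algebra R A]
    (h : IsPowerSumFirstKind s ψ) {n : ℕ} (hn : 0 < n) :
    ψ n = ∑ J : Composition n, signedLastPart R J.blocks • (J.blocks.map s).prod := by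
  induction n using Nat.strong_induction_on with
  | _ n ih =>
    obtain ⟨d, rfl⟩ := Nat.exists_eq_add_one_of_ne_zero hn.ne'
    let term (L : List ℕ) : A := signedLastPart R L • (L.map s).prod
    have term_singleton : term [d + 1] = (d + 1) • s (d + 1) := by
      simp only [term, signedLastPart_singleton, Nat.cast_smul_eq_nsmul, List.map_singleton,
        List.prod_singleton]
    have sum_term_cons (k : ℕ) (hk : k < d) :
        ∑ J : Composition (d - k), term ((k + 1) :: J.blocks) = -(s (k + 1) * ψ (d - k)) := by
      rw [ih (d - k) (by omega) (by omega), mul_sum, ← sum_neg_distrib]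
      refine sum_congr rfl fun J _ => ?_
      have hJ : J.blocks ≠ [] := mt J.blocks_eq_nil.1 (by omega)
      simp only [term, signedLastPart_cons R _ hJ, List.map_cons, List.prod_cons, neg_smul,
        mul_smul_comm]
    have newton : (d + 1) • s (d + 1) = ∑ k ∈ range d, s (k + 1) * ψ (d - k) + ψ (d + 1) := by
      simp only [h.newton (d + 1) d.succ_pos, sum_range_succ', Nat.add_sub_add_right, h.zero,
        one_mul, Nat.sub_zero]
    symm
    calc ∑ J : Composition (d + 1), term J.blocks
        = ∑ k ∈ range d, -(s (k + 1) * ψ (d - k)) + (d + 1) • s (d + 1) := by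
          rw [sum_composition_cons, sum_range_succ, Nat.sub_self,
            sum_composition_zero fun L => term ((d + 1) :: L), term_singleton,
            sum_congr rfl fun k hk => sum_term_cons k (mem_range.1 hk)]
      _ = ψ (d + 1) := by rw [newton, sum_neg_distrib, neg_add_cancel_left]

end OnePart

theorem S_psi_transition_general {𝕜 A : Type*} [Field 𝕜] [CharZero 𝕜] [Ring A] [Algebra 𝕜 A]
    {s ψ : ℕ → A} (h : IsPowerSumFirstKind s ψ) {n : ℕ} (I : Composition n) :
    ((I.blocks.map s).prod =
      ∑ J : Composition n,
        if psums I.blocks ⊆ psums J.blocks then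
          (piu J.blocks I.blocks : 𝕜)⁻¹ • (J.blocks.map ψ).prod
        else 0) ∧
    ((I.blocks.map ψ).prod =
      ∑ J : Composition n,
        if psums I.blocks ⊆ psums J.blocks then
          ((-1 : 𝕜) ^ (J.length - I.length) * (lpP J.blocks I.blocks : 𝕜)) • (J.blocks.map s).prod
        else 0) := by
  constructor
  · refine prod_map_eq_sum_refinement (b := fun J => (prodPartialSums J : 𝕜)⁻¹)
      (c := fun J I => (piu J I : 𝕜)⁻¹)
      (fun m _ => h.complete_eq_sum_powerSum m) (by simp [piu]) ?_ I
    intro m n K I J _ _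
    rw [piu_append, Nat.cast_mul, mul_inv]
  · exact prod_map_eq_sum_refinement (b := signedLastPart 𝕜)
      (c := fun J I => (-1 : 𝕜) ^ (J.length - I.length) * (lpP J I : 𝕜))
      (fun m hm => h.powerSum_eq_sum_complete hm) (by simp [lpP])
      (neg_one_pow_mul_lpP_append 𝕜) I

/-- **Transition between the bases `S^I` and `Ψ^J`**: if `Ψ` satisfies the defining
recursion `n·S_n = ∑_{k=0}^{n−1} S_k Ψ_{n−k}` of the noncommutative power sums of the
first kind, then for every composition `I` of `n`,
`S^I = ∑_{J ⪰ I} (1/π_u(J,I)) Ψ^J` and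
`Ψ^I = ∑_{J ⪰ I} (−1)^{ℓ(J)−ℓ(I)} lp(J,I) S^J`. -/
theorem S_psi_transition
    (Ψ : ℕ → Sym)
    (hΨ : ∀ n : ℕ, 1 ≤ n → (n : ℚ) • S n = ∑ k ∈ Finset.range n, S k * Ψ (n - k))
    (n : ℕ) (I : Composition n) :
    (SProd I.blocks =
      ∑ J : Composition n,
        if psums I.blocks ⊆ psums J.blocks then
          ((piu J.blocks I.blocks : ℚ))⁻¹ • (J.blocks.map Ψ).prod
        else 0) ∧
    ((I.blocks.map Ψ).prod =
      ∑ J : Composition n,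
        if psums I.blocks ⊆ psums J.blocks then
          ((-1 : ℚ) ^ (J.length - I.length) * (lpP J.blocks I.blocks : ℚ)) • SProd J.blocks
        else 0) :=
  S_psi_transition_general
    ⟨rfl, fun n hn => by rw [← Nat.cast_smul_eq_nsmul ℚ, hΨ n hn]⟩ I

end

end NCSF
end
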